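/- arXiv:1907.00272 — 8 statements merged into one kernel-verified Lean document; each statement's English description precedes it below -/
import Mathlib

section
/- Let G be a finite simple graph that admits an intersection model by non-crossing paths in a host graph: for every vertex v of G there is a nonempty set P_v of nodes of a host graph H such that each P_v induces a path in H, distinct vertices u and v of G are adjacent if and only if P_u ∩ P_v ≠ ∅, and for all distinct u,v both P_u \ P_v and P_v \ P_u induce connected (possibly empty) subgraphs of H. Then G is claw-free. -/
/-!
In a claw with centre `c` and leaves `x, y, z`, the sets `P x`, `P y`, `P z` are pairwise disjoint
and each contains a node of the path `P c`. Among three such nodes one, say that of `P y`, lies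
strictly between the other two along `P c`. Then `P c \ P y` contains nodes of `P c` on both sides
of a deleted node, so it is disconnected (`not_preconnected_range_diff`), contradicting that
`P c` and `P y` are non-crossing.
-/

open SimpleGraph

/-- A set `S` of nodes of a host graph `H` induces a path in `H`:
there is an enumeration of `S` such that two nodes of `S` are adjacent
in `H` iff they are consecutive in the enumeration. -/
def InducesPath {β : Type*} (H : SimpleGraph β) (S : Set β) : Prop :=
  ∃ (n : ℕ) (f : Fin (n + 1) → β), Function.Injective f ∧ Set.range f = S ∧
    ∀ i j : Fin (n + 1), H.Adj (f i) (f j) ↔ (i.val + 1 = j.val ∨ j.val + 1 = i.val)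

/-- Two node sets are non-crossing in a host graph `H`: each set difference
induces a connected (possibly empty) subgraph of `H`. -/
def NonCrossing {β : Type*} (H : SimpleGraph β) (S S' : Set β) : Prop :=
  (H.induce (S \ S')).Preconnected ∧ (H.induce (S' \ S)).Preconnected

/-- The claw `K_{1,3}`: vertex `0` adjacent to `1`, `2`, `3`, which are pairwise nonadjacent. -/
def claw : SimpleGraph (Fin 4) := SimpleGraph.fromRel (fun a b => a = 0 ∨ b = 0)

/-- A graph is claw-free when it has no induced subgraph isomorphic to `K_{1,3}`. -/
def ClawFree {V : Type*} (G : SimpleGraph V) : Prop := ¬ Nonempty (claw ↪g G)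

/-- A graph is chordal when it has no induced cycle of length at least four. -/
def Chordal {V : Type*} (G : SimpleGraph V) : Prop :=
  ∀ n : ℕ, 4 ≤ n → ¬ Nonempty (cycleGraph n ↪g G)

/-- The 3-sun: triangle `0,1,2` and pairwise nonadjacent vertices `3,4,5` with
`3 ~ 0,1`; `4 ~ 1,2`; `5 ~ 2,0`. -/
def threeSun : SimpleGraph (Fin 6) := SimpleGraph.fromRel (fun a b =>
  (a = 0 ∧ b = 1) ∨ (a = 0 ∧ b = 2) ∨ (a = 1 ∧ b = 2) ∨
  (a = 3 ∧ b = 0) ∨ (a = 3 ∧ b = 1) ∨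
  (a = 4 ∧ b = 1) ∨ (a = 4 ∧ b = 2) ∨
  (a = 5 ∧ b = 2) ∨ (a = 5 ∧ b = 0))

/-- The net: triangle `0,1,2` with pendant vertices `3 ~ 0`, `4 ~ 1`, `5 ~ 2`. -/
def net : SimpleGraph (Fin 6) := SimpleGraph.fromRel (fun a b =>
  (a = 0 ∧ b = 1) ∨ (a = 0 ∧ b = 2) ∨ (a = 1 ∧ b = 2) ∨
  (a = 3 ∧ b = 0) ∨ (a = 4 ∧ b = 1) ∨ (a = 5 ∧ b = 2))

/-- `s` is a maximal clique of `G`. -/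
def IsMaxClique {V : Type*} (G : SimpleGraph V) (s : Set V) : Prop :=
  G.IsClique s ∧ ∀ t : Set V, G.IsClique t → s ⊆ t → s = t

/-- `x` is an endpoint of the set `S` (inducing a path in `T`): `x ∈ S` and
`x` has at most one neighbour inside `S`. -/
def IsPathEnd {β : Type*} (T : SimpleGraph β) (S : Set β) (x : β) : Prop :=
  x ∈ S ∧ {y ∈ S | T.Adj x y}.Subsingleton

/-- `x` is a terminal of the model `P` in `T`: it is an endpoint of every path containing it. -/
def IsTerminal {V β : Type*} (T : SimpleGraph β) (P : V → Set β) (x : β) : Prop :=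
  ∀ v : V, x ∈ P v → IsPathEnd T (P v) x

/-- `x` is a junction of the model `P` in `T`: it is an internal (non-endpoint) node of
every path containing it. -/
def IsJunction {V β : Type*} (T : SimpleGraph β) (P : V → Set β) (x : β) : Prop :=
  ∀ v : V, x ∈ P v → ¬ IsPathEnd T (P v) x

/-- `x` is mixed: neither a terminal nor a junction. -/
def IsMixed {V β : Type*} (T : SimpleGraph β) (P : V → Set β) (x : β) : Prop :=
  ¬ IsTerminal T P x ∧ ¬ IsJunction T P x

/-- In the tree `T` rooted at `r`, `a` is an ancestor of `b`:
`a` lies on the unique path from `b` to `r`. -/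
def Ancestor {β : Type*} (T : SimpleGraph β) (r a b : β) : Prop :=
  ∀ w : T.Walk b r, w.IsPath → a ∈ w.support

/-- `S` is a dominating set of `G`. -/
def IsDom {V : Type*} (G : SimpleGraph V) (S : Set V) : Prop :=
  ∀ v : V, v ∈ S ∨ ∃ u ∈ S, G.Adj u v

/-- `S` is a connected dominating set of `G` (nonempty with connected induced subgraph). -/
def IsConnDom {V : Type*} (G : SimpleGraph V) (S : Set V) : Prop :=
  IsDom G S ∧ (G.induce S).Connected

/-- Two vertices are twins when they have the same closed neighbourhood. -/
def Twins {V : Type*} (G : SimpleGraph V) (u v : V) : Prop :=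
  insert u (G.neighborSet u) = insert v (G.neighborSet v)

/-- A path `z 0, …, z (k-1)` in `T` (with `k ≥ 3` nodes) whose two end nodes are terminals
and whose inner nodes all have degree two in `T`. -/
def TerminalPath {V β : Type*} (T : SimpleGraph β) (P : V → Set β) (k : ℕ) (z : ℕ → β) : Prop :=
  3 ≤ k ∧ (∀ i j, i < k → j < k → z i = z j → i = j) ∧
  (∀ i, i + 1 < k → T.Adj (z i) (z (i + 1))) ∧
  IsTerminal T P (z 0) ∧ IsTerminal T P (z (k - 1)) ∧
  ∀ i, 0 < i → i + 1 < k → (T.neighborSet (z i)).ncard = 2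

/-- Edge part of type (1): the three edges incident to a junction `x`,
whose three neighbours are all terminals. -/
def StarPart {V β : Type*} (T : SimpleGraph β) (P : V → Set β) (p : Set (Sym2 β)) : Prop :=
  ∃ x : β, IsJunction T P x ∧ (T.neighborSet x).ncard = 3 ∧
    (∀ y ∈ T.neighborSet x, IsTerminal T P y) ∧
    p = {e | e ∈ T.edgeSet ∧ x ∈ e}

/-- Edge part of type (2): the edges of a path `z 0, …, z k` in `T` whose two end nodes
are terminals and each of whose internal nodes has degree two in `T` and is mixed. -/
def PathPart {V β : Type*} (T : SimpleGraph β) (P : V → Set β) (p : Set (Sym2 β)) : Prop :=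
  ∃ (k : ℕ) (z : ℕ → β), 1 ≤ k ∧
    (∀ i j, i ≤ k → j ≤ k → z i = z j → i = j) ∧
    (∀ i, i < k → T.Adj (z i) (z (i + 1))) ∧
    IsTerminal T P (z 0) ∧ IsTerminal T P (z k) ∧
    (∀ i, 0 < i → i < k → (T.neighborSet (z i)).ncard = 2 ∧ IsMixed T P (z i)) ∧
    p = {e | ∃ i, i < k ∧ e = s(z i, z (i + 1))}

/-- `v` is a cut-vertex of `G`: deleting `v` leaves a disconnected graph. -/
def IsCutVertex {V : Type*} (G : SimpleGraph V) (v : V) : Prop :=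
  ¬ (G.induce {u | u ≠ v}).Preconnected

/-- `B` is (the vertex set of) a block of `G`: a maximal connected subgraph
having no cut-vertex of its own. -/
def IsBlock {V : Type*} (G : SimpleGraph V) (B : Set V) : Prop :=
  (G.induce B).Connected ∧ (∀ v ∈ B, (G.induce (B \ {v})).Preconnected) ∧
  ∀ B' : Set V, B ⊆ B' → (G.induce B').Connected →
    (∀ v ∈ B', (G.induce (B' \ {v})).Preconnected) → B = B'

/-- The node type of the block-cutpoint tree: cut-vertices and blocks of `G`. -/
def BCVert {V : Type*} (G : SimpleGraph V) : Type _ :=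
  {v : V // IsCutVertex G v} ⊕ {B : Set V // IsBlock G B}

/-- The block-cutpoint tree of `G`: a cut-vertex `c` is joined to a block `B`
exactly when `c ∈ B`. -/
def bcGraph {V : Type*} (G : SimpleGraph V) : SimpleGraph (BCVert G) :=
  SimpleGraph.fromRel (fun a b =>
    ∃ (c : {v : V // IsCutVertex G v}) (B : {B : Set V // IsBlock G B}),
      a = Sum.inl c ∧ b = Sum.inr B ∧ (c : V) ∈ (B : Set V))

/-- Deleting from an induced path a set that contains a node `f j`, but neither `f i` nor `f k`
with `i < j < k`, leaves a disconnected graph: an edge of the path joins consecutive indices, so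
a walk that starts at an index below `j` and avoids `f j` never leaves the indices below `j`. -/
theorem not_preconnected_range_diff {β : Type*} (H : SimpleGraph β) {n : ℕ} (f : Fin (n + 1) → β)
    (hinj : Function.Injective f)
    (hA : ∀ i j : Fin (n + 1), H.Adj (f i) (f j) ↔ (i.val + 1 = j.val ∨ j.val + 1 = i.val))
    (T : Set β) {i j k : Fin (n + 1)} (hij : i < j) (hjk : j < k)
    (hi : f i ∉ T) (hj : f j ∈ T) (hk : f k ∉ T) :
    ¬ (H.induce (Set.range f \ T)).Preconnected := by
  intro hpre
  have key : ∀ u v : ↥(Set.range f \ T), (H.induce (Set.range f \ T)).Walk u v →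
      (∃ m, m < j ∧ f m = u.1) → ∃ m, m < j ∧ f m = v.1 := by
    intro u v w
    induction w with
    | nil => exact id
    | @cons u v _ h _ ih =>
      rintro ⟨m, hm, hmu⟩
      apply ih
      obtain ⟨⟨l, hl⟩, hvT⟩ := v.2
      have hadj : H.Adj (f m) (f l) := by rw [hmu, hl]; exact h
      have hlj : l ≠ j := by
        rintro rfl
        exact hvT (hl ▸ hj)
      refine ⟨l, ?_, hl⟩
      have := (hA m l).1 hadj
      omega
  obtain ⟨w⟩ := hpre ⟨f i, ⟨i, rfl⟩, hi⟩ ⟨f k, ⟨k, rfl⟩, hk⟩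
  obtain ⟨m, hm, hmk⟩ := key _ _ w ⟨i, hij, rfl⟩
  have := hinj hmk
  omega

/-- intersection graphs of non-crossing paths (in any host) are claw-free. -/
theorem stmt_0 {V β : Type*} [Fintype V] (G : SimpleGraph V) (H : SimpleGraph β)
    (P : V → Set β)
    (hne : ∀ v : V, (P v).Nonempty)
    (hpath : ∀ v : V, InducesPath H (P v))
    (hadj : ∀ u v : V, u ≠ v → (G.Adj u v ↔ (P u ∩ P v).Nonempty))
    (hnc : ∀ u v : V, u ≠ v → NonCrossing H (P u) (P v)) :
    ClawFree G := by
  rintro ⟨e⟩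
  obtain ⟨n, f, hfinj, hf, hA⟩ := hpath (e 0)
  have hinj : ∀ a b : Fin 4, a ≠ b → e a ≠ e b := fun a b h h' => h (e.injective h')
  -- every leaf path contains a node of the centre path
  have hit : ∀ a : Fin 4, a ≠ 0 → ∃ i, f i ∈ P (e a) := by
    intro a ha
    have h1 : claw.Adj 0 a := by simp [claw, ha.symm]
    obtain ⟨x, hx0, hxa⟩ := (hadj _ _ (hinj 0 a ha.symm)).1 (e.map_adj_iff.2 h1)
    rw [← hf] at hx0
    obtain ⟨i, rfl⟩ := hx0
    exact ⟨i, hxa⟩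
  have hdisj : ∀ a b : Fin 4, a ≠ 0 → b ≠ 0 → a ≠ b → ∀ x, x ∈ P (e a) → x ∉ P (e b) := by
    intro a b ha hb hab x hxa hxb
    have h1 : claw.Adj a b := e.map_adj_iff.1 ((hadj _ _ (hinj a b hab)).2 ⟨x, hxa, hxb⟩)
    simp [claw, ha, hb] at h1
  -- no leaf path can be met strictly between the two others
  have nomid : ∀ a b c : Fin 4, a ≠ 0 → b ≠ 0 → c ≠ 0 → a ≠ b → c ≠ b → ∀ i j k,
      f i ∈ P (e a) → f j ∈ P (e b) → f k ∈ P (e c) → i < j → j < k → False := by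
    intro a b c ha hb hc hab hcb i j k hi hj hk hij hjk
    have hpre := (hnc (e 0) (e b) (hinj 0 b hb.symm)).1
    rw [← hf] at hpre
    exact not_preconnected_range_diff H f hfinj hA (P (e b)) hij hjk
      (hdisj a b ha hb hab _ hi) hj (hdisj c b hc hb hcb _ hk) hpre
  have hne' : ∀ a b : Fin 4, a ≠ 0 → b ≠ 0 → a ≠ b → ∀ i j,
      f i ∈ P (e a) → f j ∈ P (e b) → i ≠ j := by
    rintro a b ha hb hab i j hi hj rfl
    exact hdisj a b ha hb hab _ hi hj
  obtain ⟨i, hi⟩ := hit 1 (by decide)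
  obtain ⟨j, hj⟩ := hit 2 (by decide)
  obtain ⟨k, hk⟩ := hit 3 (by decide)
  have hij := hne' 1 2 (by decide) (by decide) (by decide) i j hi hj
  have hjk := hne' 2 3 (by decide) (by decide) (by decide) j k hj hk
  have hik := hne' 1 3 (by decide) (by decide) (by decide) i k hi hk
  have m1 := nomid 2 1 3 (by decide) (by decide) (by decide) (by decide) (by decide) j i k hj hi hk
  have m1' := nomid 3 1 2 (by decide) (by decide) (by decide) (by decide) (by decide) k i j hk hi hj
  have m2 := nomid 1 2 3 (by decide) (by decide) (by decide) (by decide) (by decide) i j k hi hj hk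
  have m2' := nomid 3 2 1 (by decide) (by decide) (by decide) (by decide) (by decide) k j i hk hj hi
  have m3 := nomid 1 3 2 (by decide) (by decide) (by decide) (by decide) (by decide) i k j hi hk hj
  have m3' := nomid 2 3 1 (by decide) (by decide) (by decide) (by decide) (by decide) j k i hj hk hi
  rcases lt_or_gt_of_ne hij with h1 | h1 <;> rcases lt_or_gt_of_ne hjk with h2 | h2 <;>
    rcases lt_or_gt_of_ne hik with h3 | h3 <;> tauto
end

section
/- If a finite simple graph G has an NC-path-tree model, then G is claw-free and chordal. -/
/-!
Claw-freeness: if the paths of three pairwise non-adjacent vertices all meet `P v`, they do so at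
three distinct positions along `P v`. Deleting the path holding the middle position separates the
other two positions, so `P v` would cross that path (`not_preconnected_diff_of_lt`).

Chordality: fix a root `r` of the tree and let `t v` be the node of `P v` nearest to `r`. If `P u`
meets `P v` and `t u` is no deeper than `t v`, then `t v ∈ P u` (`top_mem`). On an induced cycle,
choose `v` with `t v` deepest; both cycle-neighbours of `v` then contain `t v`, hence are adjacent
to each other, which is impossible on an induced cycle of length at least four.
-/

open SimpleGraph

/-! ### Separation along an induced path -/

/-- A set inducing a path is connected, in cut form: if it meets both `A` and the complement
of `A`, some edge inside it leaves `A`. -/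
theorem InducesPath.exists_adj_crossing {β : Type*} {T : SimpleGraph β} {S : Set β}
    (hS : InducesPath T S) (A : Set β) {x y : β} (hx : x ∈ S) (hxA : x ∈ A)
    (hy : y ∈ S) (hyA : y ∉ A) :
    ∃ a b, a ∈ S ∧ b ∈ S ∧ a ∈ A ∧ b ∉ A ∧ T.Adj a b := by
  obtain ⟨n, f, -, rfl, hf⟩ := hS
  by_contra! hno
  have key : ∀ k (hk : k < n + 1), f ⟨k, hk⟩ ∈ A ↔ f 0 ∈ A := by
    intro k
    induction k with
    | zero => intro hk; rfl
    | succ k ih =>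
      intro hk
      have hk' : k < n + 1 := by omega
      have h1 : T.Adj (f ⟨k, hk'⟩) (f ⟨k + 1, hk⟩) := (hf _ _).2 (Or.inl rfl)
      rw [← ih hk']
      constructor
      · intro h
        by_contra h'
        exact hno _ _ ⟨_, rfl⟩ ⟨_, rfl⟩ h h' h1.symm
      · intro h
        by_contra h'
        exact hno _ _ ⟨_, rfl⟩ ⟨_, rfl⟩ h h' h1
  obtain ⟨i, rfl⟩ := hx
  obtain ⟨j, rfl⟩ := hy
  exact hyA ((key j.1 j.2).2 ((key i.1 i.2).1 hxA))

/-- A path is disconnected by deleting a set that contains one of its positions but misses one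
position on either side. -/
theorem not_preconnected_diff_of_lt {β : Type*} {T : SimpleGraph β} {n : ℕ} {f : Fin (n + 1) → β}
    (hf : ∀ i j : Fin (n + 1), T.Adj (f i) (f j) ↔ (i.val + 1 = j.val ∨ j.val + 1 = i.val))
    (hinj : Function.Injective f) {B : Set β} {i j k : Fin (n + 1)} (hij : i < j) (hjk : j < k)
    (hi : f i ∉ B) (hj : f j ∈ B) (hk : f k ∉ B) :
    ¬ (T.induce (Set.range f \ B)).Preconnected := by
  intro h
  obtain ⟨w⟩ := h ⟨f i, ⟨i, rfl⟩, hi⟩ ⟨f k, ⟨k, rfl⟩, hk⟩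
  -- The positions below `j` are closed under adjacency once position `j` is unavailable.
  have key : ∀ (x y : ↥(Set.range f \ B)), (T.induce (Set.range f \ B)).Walk x y →
      (∃ a < j, f a = x.1) → ∃ a < j, f a = y.1 := by
    intro x y w
    induction w with
    | nil => exact id
    | @cons x z y hadj w ih =>
      rintro ⟨a, ha, hax⟩
      apply ih
      obtain ⟨z, ⟨b, rfl⟩, hb⟩ := z
      refine ⟨b, ?_, rfl⟩
      have hadj' : T.Adj x.1 (f b) := hadj
      rw [← hax, hf] at hadj'
      have hbj : b ≠ j := by rintro rfl; exact hb hj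
      have : b.val ≠ j.val := fun h => hbj (Fin.ext h)
      rw [Fin.lt_def] at ha ⊢
      omega
  obtain ⟨a, ha, hak⟩ := key _ _ w ⟨i, hij, rfl⟩
  have := hinj hak
  subst this
  exact absurd ha (not_lt.2 hjk.le)

/-! ### Connected sets in a rooted tree -/

/-- The nodes below `t` in the graph rooted at `r`: every walk to `r` goes through `t`. -/
def descendants {β : Type*} (T : SimpleGraph β) (r t : β) : Set β :=
  {b | ∀ w : T.Walk b r, t ∈ w.support}

/-- The only edge leaving the set of descendants of `t` joins `t` to its parent. -/
theorem adj_leaving_descendants {β : Type*} {T : SimpleGraph β} (hT : T.IsTree) {r t a b : β}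
    (ha : a ∈ descendants T r t) (hb : b ∉ descendants T r t) (hab : T.Adj a b) :
    a = t ∧ T.dist b r < T.dist t r := by
  classical
  obtain ⟨w, hw⟩ := not_forall.1 hb
  have hat : a = t := by
    have := ha (Walk.cons hab w)
    rw [Walk.support_cons, List.mem_cons] at this
    rcases this with h | h
    · exact h.symm
    · exact absurd h hw
  subst hat
  refine ⟨rfl, ?_⟩
  have hp : (Walk.cons hab w.bypass).IsPath :=
    (Walk.cons_isPath_iff _ _).2 ⟨w.bypass_isPath, fun h => hw (w.support_bypass_subset_support h)⟩
  obtain ⟨q, hq, hql⟩ := hT.connected.exists_path_of_dist a r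
  have : q = Walk.cons hab w.bypass :=
    congrArg Subtype.val ((hT.isAcyclic.subsingleton_path a r).elim ⟨q, hq⟩ ⟨_, hp⟩)
  rw [← hql, this, Walk.length_cons]
  exact Nat.lt_succ_of_le (dist_le _)

/-- A descendant of `t` other than `t` itself is strictly deeper than `t`. -/
theorem eq_of_mem_descendants {β : Type*} {T : SimpleGraph β} (hT : T.IsTree) {r s t : β}
    (h : s ∈ descendants T r t) (hd : T.dist s r ≤ T.dist t r) : s = t := by
  classical
  obtain ⟨q, -, hql⟩ := hT.connected.exists_path_of_dist s r
  have ht : t ∈ q.support := h q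
  have h1 : T.dist t r ≤ (q.dropUntil t ht).length := dist_le _
  have h2 := congrArg Walk.length (q.take_spec ht)
  rw [Walk.length_append] at h2
  exact Walk.eq_of_length_eq_zero (p := q.takeUntil t ht) (by omega)

/-- If two intersecting paths have nodes `s`, `t` nearest to the root and `s` is no deeper than
`t`, then the path with nearest node `s` also contains `t`. -/
theorem top_mem {β : Type*} {T : SimpleGraph β} (hT : T.IsTree) {r s t : β} {A B : Set β}
    (hA : InducesPath T A) (hB : InducesPath T B) (hAB : (A ∩ B).Nonempty)
    (hs : s ∈ A) (ht : t ∈ B) (htmin : ∀ x ∈ B, T.dist t r ≤ T.dist x r)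
    (hst : T.dist s r ≤ T.dist t r) : t ∈ A := by
  obtain ⟨x, hxA, hxB⟩ := hAB
  have hx : x ∈ descendants T r t := by
    by_contra hx
    obtain ⟨a, b, -, hbB, ha, hb, hab⟩ := hB.exists_adj_crossing (descendants T r t) ht
      (fun w => w.start_mem_support) hxB hx
    exact absurd (adj_leaving_descendants hT ha hb hab).2 (not_lt.2 (htmin b hbB))
  by_cases hsd : s ∈ descendants T r t
  · exact eq_of_mem_descendants hT hsd hst ▸ hs
  · obtain ⟨a, b, haA, -, ha, hb, hab⟩ := hA.exists_adj_crossing _ hxA hx hs hsd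
    exact (adj_leaving_descendants hT ha hb hab).1 ▸ haA

/-! ### The two neighbours of a vertex in a long cycle -/

open Fin.CommRing in
theorem succ_ne_pred (m : ℕ) (v : Fin (m + 4)) : v + 1 ≠ v - 1 := by
  have two : (2 : Fin (m + 4)) ≠ 0 := by
    simp [Fin.ext_iff, Nat.mod_eq_of_lt (show 2 < m + 4 by omega)]
  intro h
  exact two (by linear_combination h)

open Fin.CommRing in
theorem not_adj_succ_pred (m : ℕ) (v : Fin (m + 4)) :
    ¬ (cycleGraph (m + 4)).Adj (v + 1) (v - 1) := by
  have one : (1 : Fin (m + 4)) ≠ 0 := by simp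
  have three : (3 : Fin (m + 4)) ≠ 0 := by
    simp [Fin.ext_iff, Nat.mod_eq_of_lt (show 3 < m + 4 by omega)]
  rw [cycleGraph_adj]
  rintro (h | h)
  · exact one (by linear_combination h)
  · exact three (by linear_combination -h)

/-- a graph with an NC-path-tree model is claw-free and chordal. -/
theorem stmt_1 {V β : Type*} [Fintype V] [Fintype β] (G : SimpleGraph V)
    (T : SimpleGraph β) (hT : T.IsTree)
    (P : V → Set β)
    (hne : ∀ v : V, (P v).Nonempty)
    (hpath : ∀ v : V, InducesPath T (P v))
    (hadj : ∀ u v : V, u ≠ v → (G.Adj u v ↔ (P u ∩ P v).Nonempty))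
    (hnc : ∀ u v : V, u ≠ v → NonCrossing T (P u) (P v)) :
    ClawFree G ∧ Chordal G := by
  constructor
  · rintro ⟨e⟩
    have hinj : ∀ {a b : Fin 4}, a ≠ b → e a ≠ e b := fun h h' => h (e.injective h')
    have hmeet : ∀ a : Fin 4, a ≠ 0 → (P (e 0) ∩ P (e a)).Nonempty := by
      intro a ha
      rw [← hadj _ _ (hinj ha.symm), e.map_adj_iff]
      simp [claw, ha.symm]
    have hdisj : ∀ a b : Fin 4, a ≠ 0 → b ≠ 0 → a ≠ b → ∀ x, x ∈ P (e a) → x ∉ P (e b) := by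
      intro a b ha hb hab x hxa hxb
      have h := (hadj _ _ (hinj hab)).2 ⟨x, hxa, hxb⟩
      rw [e.map_adj_iff] at h
      simp [claw, ha, hb] at h
    obtain ⟨n, f, hfi, hfr, hf⟩ := hpath (e 0)
    have hpos : ∀ a : Fin 4, a ≠ 0 → ∃ i, f i ∈ P (e a) := by
      intro a ha
      obtain ⟨x, hx0, hxa⟩ := hmeet a ha
      rw [← hfr] at hx0
      obtain ⟨i, rfl⟩ := hx0
      exact ⟨i, hxa⟩
    -- No leaf path can hold a position strictly between those of the two other leaves.
    have main : ∀ a b c : Fin 4, a ≠ 0 ∧ b ≠ 0 ∧ c ≠ 0 ∧ a ≠ b ∧ c ≠ b →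
        ∀ i j k, f i ∈ P (e a) → f j ∈ P (e b) → f k ∈ P (e c) → i < j → j < k → False := by
      rintro a b c ⟨ha, hb, hc, hab, hcb⟩ i j k hi hj hk hij hjk
      refine not_preconnected_diff_of_lt hf hfi hij hjk (hdisj a b ha hb hab _ hi) hj
        (hdisj c b hc hb hcb _ hk) ?_
      rw [hfr]
      exact (hnc _ _ (hinj hb.symm)).1
    obtain ⟨i, hi⟩ := hpos 1 (by decide)
    obtain ⟨j, hj⟩ := hpos 2 (by decide)
    obtain ⟨k, hk⟩ := hpos 3 (by decide)
    have hij : i ≠ j := by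
      rintro rfl; exact hdisj 1 2 (by decide) (by decide) (by decide) _ hi hj
    have hik : i ≠ k := by
      rintro rfl; exact hdisj 1 3 (by decide) (by decide) (by decide) _ hi hk
    have hjk : j ≠ k := by
      rintro rfl; exact hdisj 2 3 (by decide) (by decide) (by decide) _ hj hk
    have m123 := main 1 2 3 (by decide) i j k hi hj hk
    have m132 := main 1 3 2 (by decide) i k j hi hk hj
    have m213 := main 2 1 3 (by decide) j i k hj hi hk
    have m231 := main 2 3 1 (by decide) j k i hj hk hi
    have m312 := main 3 1 2 (by decide) k i j hk hi hj
    have m321 := main 3 2 1 (by decide) k j i hk hj hi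
    rcases lt_or_gt_of_ne hij with h1 | h1 <;> rcases lt_or_gt_of_ne hik with h2 | h2 <;>
      rcases lt_or_gt_of_ne hjk with h3 | h3 <;> first
        | exact m123 h1 h3
        | exact m132 h2 h3
        | exact m213 h1 h2
        | exact m231 h3 h2
        | exact m312 h2 h1
        | exact m321 h3 h1
  · rintro n hn ⟨e⟩
    obtain ⟨m, rfl⟩ := Nat.exists_eq_add_of_le' hn
    obtain ⟨r⟩ := hT.connected.nonempty
    have htop : ∀ v, ∃ t ∈ P v, ∀ x ∈ P v, T.dist t r ≤ T.dist x r := fun v =>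
      Set.exists_min_image (P v) (fun x => T.dist x r) (Set.toFinite _) (hne v)
    choose t ht htmin using htop
    obtain ⟨v, hv⟩ := Finite.exists_max (fun i : Fin (m + 4) => T.dist (t (e i)) r)
    have hmem : ∀ u, (cycleGraph (m + 4)).Adj u v → t (e v) ∈ P (e u) := by
      intro u huv
      have hne' : e u ≠ e v := fun h => huv.ne (e.injective h)
      exact top_mem hT (hpath _) (hpath _) ((hadj _ _ hne').1 (e.map_adj_iff.2 huv))
        (ht _) (ht _) (htmin _) (hv u)
    have h1 : t (e v) ∈ P (e (v + 1)) := hmem _ (by rw [cycleGraph_adj]; simp)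
    have h2 : t (e v) ∈ P (e (v - 1)) := hmem _ (by rw [cycleGraph_adj]; simp)
    have hA := (hadj _ _ (fun h => succ_ne_pred m v (e.injective h))).2 ⟨_, h1, h2⟩
    rw [e.map_adj_iff] at hA
    exact not_adj_succ_pred m v hA
end

section
/- Let G be a finite connected claw-free chordal graph and let T be a clique tree of G. Then for every vertex v of G, the set K_v of maximal cliques of G containing v induces a path in T. -/
/-!
The set `K_v` is a subtree of `T`, so it suffices to see that no node `x ∈ K_v` has three
neighbours `y₁, y₂, y₃` in `K_v`: a finite tree of maximum degree at most two is a path.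
Given such a node, maximality of the cliques provides `uᵢ ∈ C yᵢ \ C x`. Were `uᵢ` and `uⱼ` equal
or adjacent for some `i ≠ j`, a maximal clique would contain both, so the subtrees of `uᵢ` and `uⱼ`
would meet; their union would be a connected set containing `yᵢ` and `yⱼ` but avoiding `x`, which
is impossible because `x` separates its neighbours in a tree. So `v, u₁, u₂, u₃` is a claw.

That a finite tree of maximum degree at most two is a path follows by taking a longest path: it
cannot be extended at either end, its inner vertices have no further neighbours, so by connectivity
it covers everything, and acyclicity leaves no chords.
-/

open SimpleGraph

/-- Acyclicity excludes chords: adjacent vertices of a path are consecutive on it. -/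
theorem succ_eq_of_adj_getVert {α : Type*} {H : SimpleGraph α} (hH : H.IsAcyclic) {a b : α}
    {p : H.Walk a b} (hp : p.IsPath) {i j : ℕ} (hij : i < j) (hj : j ≤ p.length)
    (hadj : H.Adj (p.getVert i) (p.getVert j)) : i + 1 = j := by
  have hend : (p.drop i).getVert (j - i) = p.getVert j := by
    rw [Walk.drop_getVert]; congr 1; omega
  have hq : ((p.drop i).take (j - i)).IsPath := (hp.drop i).take _
  have hadj' : H.Adj (p.getVert i) ((p.drop i).getVert (j - i)) := hend ▸ hadj
  have h := congrArg (fun q => q.1.length)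
    ((hH.subsingleton_path _ _).elim ⟨_, hq⟩ (Path.singleton hadj'))
  simp [Walk.take_length, Walk.drop_length] at h
  omega

/-- A finite tree in which no vertex has three distinct neighbours is a path. -/
theorem inducesPath_univ_of_degree_le_two {α : Type*} [Finite α] {H : SimpleGraph α}
    (hH : H.IsTree)
    (hdeg : ∀ x a b c, H.Adj x a → H.Adj x b → H.Adj x c → a ≠ b → a ≠ c → b ≠ c → False) :
    InducesPath H Set.univ := by
  have : Nonempty α := hH.connected.nonempty
  obtain ⟨a, b, p, hp, hmax⟩ := Walk.exists_isPath_forall_isPath_length_le_length H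
  have hspan : ∀ x, x ∈ p.support := by
    by_contra! hx
    obtain ⟨x, hx⟩ := hx
    obtain ⟨q⟩ := hH.connected.preconnected a x
    obtain ⟨⟨⟨y, z⟩, hyz⟩, -, hy, hz⟩ :=
      q.exists_boundary_dart {w | w ∈ p.support} p.start_mem_support hx
    simp only [Set.mem_ofPred_eq] at hy hz hyz
    obtain ⟨k, rfl, hk⟩ := Walk.mem_support_iff_exists_getVert.1 hy
    rcases Nat.eq_zero_or_pos k with rfl | hk0
    · rw [Walk.getVert_zero] at hyz
      have := hmax _ _ (Walk.cons hyz.symm p) (hp.cons hz)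
      simp at this
    rcases hk.eq_or_lt with rfl | hkl
    · rw [Walk.getVert_length] at hyz
      have := hmax _ _ (p.concat hyz) (hp.concat hz hyz)
      simp at this
    -- An inner vertex of the path with a neighbour `z` off the path has three neighbours.
    have hprev : H.Adj (p.getVert k) (p.getVert (k - 1)) := by
      have := p.adj_getVert_succ (i := k - 1) (by omega)
      rw [Nat.sub_add_cancel hk0] at this
      exact this.symm
    refine hdeg _ _ _ z hprev (p.adj_getVert_succ hkl) hyz ?_ ?_ ?_
    · intro h
      have := hp.getVert_injOn (by simp; omega) (by simp; omega) h
      omega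
    · rintro rfl; exact hz (p.getVert_mem_support _)
    · rintro rfl; exact hz (p.getVert_mem_support _)
  refine ⟨p.length, fun i => p.getVert i, ?_, ?_, ?_⟩
  · intro i j h
    exact Fin.ext (hp.getVert_injOn (Nat.lt_succ_iff.1 i.2) (Nat.lt_succ_iff.1 j.2) h)
  · refine Set.eq_univ_of_forall fun x => ?_
    obtain ⟨k, hk, hkl⟩ := Walk.mem_support_iff_exists_getVert.1 (hspan x)
    exact ⟨⟨k, Nat.lt_succ_iff.2 hkl⟩, hk⟩
  · intro i j
    have hi := Nat.lt_succ_iff.1 i.2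
    have hj := Nat.lt_succ_iff.1 j.2
    constructor
    · intro h
      rcases lt_trichotomy i.val j.val with hlt | heq | hlt
      · exact Or.inl (succ_eq_of_adj_getVert hH.isAcyclic hp hlt hj h)
      · exact (h.ne (congrArg p.getVert heq)).elim
      · exact Or.inr (succ_eq_of_adj_getVert hH.isAcyclic hp hlt hi h.symm)
    · rintro (h | h)
      · have := p.adj_getVert_succ (i := i.val) (by omega)
        rwa [h] at this
      · have := p.adj_getVert_succ (i := j.val) (by omega)
        rw [h] at this
        exact this.symm

theorem InducesPath.of_induce {β : Type*} {H : SimpleGraph β} {S : Set β}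
    (h : InducesPath (H.induce S) Set.univ) : InducesPath H S := by
  obtain ⟨n, f, hinj, hran, hadj⟩ := h
  refine ⟨n, fun i => f i, fun i j hij => hinj (Subtype.ext hij), ?_, fun i j => hadj i j⟩
  rw [show (fun i => (f i : β)) = Subtype.val ∘ f from rfl, Set.range_comp, hran]
  simp

/-- In an acyclic graph, `x` separates its neighbours: a connected set containing two of them
contains `x`. -/
theorem mem_of_connected_of_adj {β : Type*} {T : SimpleGraph β} (hT : T.IsAcyclic) {x y z : β}
    (hxy : T.Adj x y) (hxz : T.Adj x z) (hyz : y ≠ z) {S : Set β}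
    (hS : (T.induce S).Preconnected) (hy : y ∈ S) (hz : z ∈ S) : x ∈ S := by
  classical
  obtain ⟨w⟩ := hS ⟨y, hy⟩ ⟨z, hz⟩
  let w' : T.Walk y z := w.map (Embedding.induce S).toHom
  let q : T.Walk y z := Walk.cons hxy.symm (Walk.cons hxz Walk.nil)
  have hq : q.IsPath := by
    simp [q, Walk.cons_isPath_iff, hxy.ne.symm, hxz.ne, hyz]
  have heq : w'.bypass = q :=
    congrArg Subtype.val ((hT.subsingleton_path _ _).elim ⟨_, w'.bypass_isPath⟩ ⟨_, hq⟩)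
  have hx : x ∈ w'.bypass.support := by rw [heq]; simp [q]
  have hx' : x ∈ (w.map (Embedding.induce S).toHom).support := w'.support_bypass_subset_support hx
  rw [Walk.support_map, List.mem_map] at hx'
  obtain ⟨s, -, rfl⟩ := hx'
  exact s.2

theorem exists_isMaxClique_of_isClique {V : Type*} [Finite V] {G : SimpleGraph V} {s : Set V}
    (hs : G.IsClique s) : ∃ t, IsMaxClique G t ∧ s ⊆ t := by
  obtain ⟨t, hst, ht⟩ := Finite.exists_le_maximal (p := fun t : Set V => G.IsClique t) hs
  exact ⟨t, ⟨ht.prop, fun r hr htr => ht.eq_of_le hr htr⟩, hst⟩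

theorem nonempty_claw_embedding {V : Type*} {G : SimpleGraph V} {v a b c : V}
    (ha : G.Adj v a) (hb : G.Adj v b) (hc : G.Adj v c) (hab : a ≠ b) (hac : a ≠ c) (hbc : b ≠ c)
    (hab' : ¬ G.Adj a b) (hac' : ¬ G.Adj a c) (hbc' : ¬ G.Adj b c) :
    Nonempty (claw ↪g G) := by
  have hinj : Function.Injective ![v, a, b, c] := by
    intro i j
    fin_cases i <;> fin_cases j <;>
      simp [ha.ne, hb.ne, hc.ne, ha.ne', hb.ne', hc.ne', hab, hac, hbc, hab.symm, hac.symm,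
        hbc.symm]
  have hadj : ∀ i j, G.Adj (![v, a, b, c] i) (![v, a, b, c] j) ↔ claw.Adj i j := by
    intro i j
    fin_cases i <;> fin_cases j <;>
      simp [claw, ha, hb, hc, ha.symm, hb.symm, hc.symm, hab', hac', hbc', G.adj_comm b a,
        G.adj_comm c a, G.adj_comm c b]
  exact ⟨⟨⟨_, hinj⟩, hadj _ _⟩⟩

/-- in any clique tree of a finite connected claw-free chordal graph,
the set of maximal cliques containing a vertex induces a path. -/
theorem stmt_2 {V β : Type*} [Fintype V] (G : SimpleGraph V)
    (hconn : G.Connected) (hclaw : ClawFree G) (hchord : Chordal G)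
    (T : SimpleGraph β) (hT : T.IsTree)
    (C : β → Set V) (hCinj : Function.Injective C)
    (hCmax : ∀ x : β, IsMaxClique G (C x))
    (hCsurj : ∀ s : Set V, IsMaxClique G s → ∃ x : β, C x = s)
    (hKconn : ∀ v : V, (T.induce {x : β | v ∈ C x}).Connected) :
    ∀ v : V, InducesPath T {x : β | v ∈ C x} := by
  intro v
  have : Finite β := Finite.of_injective C hCinj
  have hpriv : ∀ x y, T.Adj x y → ∃ u ∈ C y, u ∉ C x := by
    intro x y hxy
    by_contra! h
    exact hxy.ne' (hCinj ((hCmax y).2 _ (hCmax x).1 h))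
  -- Private vertices of two branches at `x` are distinct and nonadjacent.
  have hsep : ∀ x y z u w, T.Adj x y → T.Adj x z → y ≠ z → u ∈ C y → u ∉ C x → w ∈ C z →
      w ∉ C x → u ≠ w ∧ ¬ G.Adj u w := by
    intro x y z u w hxy hxz hyz hu hux hw hwx
    rw [← not_or]
    intro h
    have hcl : G.IsClique {u, w} := by
      rw [isClique_pair]
      exact fun hne => h.resolve_left hne
    obtain ⟨t, ht, hst⟩ := exists_isMaxClique_of_isClique hcl
    obtain ⟨m, rfl⟩ := hCsurj t ht
    have hun := induce_union_connected (hKconn u).preconnected (hKconn w).preconnected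
      ⟨m, hst (Set.mem_insert u _), hst (Set.mem_insert_of_mem u rfl)⟩
    exact (mem_of_connected_of_adj hT.isAcyclic hxy hxz hyz hun.preconnected (Or.inl hu)
      (Or.inr hw)).elim hux hwx
  refine InducesPath.of_induce (inducesPath_univ_of_degree_le_two
    ⟨hKconn v, hT.isAcyclic.induce _⟩ ?_)
  rintro ⟨x, hx⟩ ⟨a, ha⟩ ⟨b, hb⟩ ⟨c, hc⟩ hxa hxb hxc hab hac hbc
  simp only [comap_adj, Function.Embedding.subtype_apply, ne_eq, Subtype.mk.injEq,
    Set.mem_ofPred_eq] at *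
  obtain ⟨u₁, h₁, h₁x⟩ := hpriv x a hxa
  obtain ⟨u₂, h₂, h₂x⟩ := hpriv x b hxb
  obtain ⟨u₃, h₃, h₃x⟩ := hpriv x c hxc
  have hadj : ∀ y u, v ∈ C y → u ∈ C y → u ∉ C x → G.Adj v u := fun y u hv hu hux =>
    (hCmax y).1 hv hu (fun h => hux (h ▸ hx))
  obtain ⟨n₁₂, a₁₂⟩ := hsep x a b u₁ u₂ hxa hxb hab h₁ h₁x h₂ h₂x
  obtain ⟨n₁₃, a₁₃⟩ := hsep x a c u₁ u₃ hxa hxc hac h₁ h₁x h₃ h₃x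
  obtain ⟨n₂₃, a₂₃⟩ := hsep x b c u₂ u₃ hxb hxc hbc h₂ h₂x h₃ h₃x
  exact hclaw (nonempty_claw_embedding (hadj a u₁ ha h₁ h₁x) (hadj b u₂ hb h₂ h₂x)
    (hadj c u₃ hc h₃ h₃x) n₁₂ n₁₃ n₂₃ a₁₂ a₁₃ a₂₃)
end

section
/- Let G be a finite connected claw-free chordal graph and let T be a clique tree of G. Then the family {K_v : v ∈ V(G)} is pairwise non-crossing in T: for all distinct vertices u,v of G, both K_u \ K_v and K_v \ K_u induce connected (possibly empty) subgraphs of T. -/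
/-!
Only claw-freeness and the tree structure matter. Write `K_v` for the set of nodes whose clique
contains `v`, and suppose `x, y ∈ K_u \ K_v` lie in different components of `K_u \ K_v`. Since `K_u`
is connected, each component is joined to `K_u ∩ K_v` by an edge of `T`, say `x'a` and `y'b`, where
`x' ≠ y'` lie outside `K_v` and `a, b` inside. By maximality there are vertices
`w ∈ C x' \ C a` and `w' ∈ C y' \ C b`, both adjacent to `u`, as is `v`.

Every edge of `T` is a bridge, so no node can reach `x'` avoiding `a` and also reach `a` avoiding
`x'` (`IsAcyclic.false_of_walks`). Hence `K_w` is disjoint from the connected set `K_v` and,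
by the same principle, so is `K_{w'}`; and `K_w`, `K_{w'}` are disjoint from each other, because
`K_v` links `a` to `b`. Two adjacent vertices share a maximal clique, so `v, w, w'` are pairwise
nonadjacent and `u, v, w, w'` is a claw.
-/

open SimpleGraph

lemma exists_walk_of_preconnected_induce {β : Type*} {T : SimpleGraph β} {A : Set β}
    (hA : (T.induce A).Preconnected) {s t : β} (hs : s ∈ A) (ht : t ∈ A) :
    ∃ p : T.Walk s t, ∀ z ∈ p.support, z ∈ A := by
  obtain ⟨p⟩ := hA ⟨s, hs⟩ ⟨t, ht⟩
  refine ⟨p.map (Embedding.induce A).toHom, fun z hz => ?_⟩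
  have e := Walk.support_map (Embedding.induce A).toHom p
  obtain ⟨q, -, rfl⟩ := List.mem_map.1 ((congrArg (z ∈ ·) e).mp hz)
  exact q.2

/-- An edge `xa` of an acyclic graph separates its ends: no node reaches `x` avoiding `a` and also
reaches `a` avoiding `x`. -/
lemma SimpleGraph.IsAcyclic.false_of_walks {β : Type*} {T : SimpleGraph β} (hT : T.IsAcyclic)
    {x a c : β} (hxa : T.Adj x a) (p : T.Walk c x) (q : T.Walk c a)
    (hp : a ∉ p.support) (hq : x ∉ q.support) : False := by
  have hb : T.IsBridge s(x, a) := isAcyclic_iff_forall_adj_isBridge.1 hT hxa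
  have h := isBridge_iff_forall_walk_mem_edges.1 hb (p.reverse.append q)
  rw [Walk.edges_append, List.mem_append] at h
  rcases h with h | h
  · rw [Walk.edges_reverse, List.mem_reverse] at h
    exact hp (p.snd_mem_support_of_mem_edges h)
  · exact hq (q.fst_mem_support_of_mem_edges h)

/-- If the connected set `A` contains two nodes in different components of `A \ B`, then the
component of the first one has an edge leading into `A ∩ B`. -/
lemma exists_adj_inter_of_not_reachable {β : Type*} {T : SimpleGraph β} {A B : Set β}
    (hA : (T.induce A).Preconnected) (x y : ↥(A \ B))
    (hxy : ¬ (T.induce (A \ B)).Reachable x y) :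
    ∃ (x' : ↥(A \ B)) (a : β), (T.induce (A \ B)).Reachable x x' ∧ a ∈ A ∧ a ∈ B ∧
      T.Adj x' a := by
  obtain ⟨p, hp⟩ := exists_walk_of_preconnected_induce hA x.2.1 y.2.1
  obtain ⟨d, hd, ⟨z, hz, hzd⟩, h2⟩ := p.exists_boundary_dart
    {z | ∃ z' : ↥(A \ B), (T.induce (A \ B)).Reachable x z' ∧ z'.1 = z}
    ⟨x, Reachable.refl _, rfl⟩
    (by rintro ⟨z, hz, hzy⟩; exact hxy (by rwa [Subtype.ext hzy] at hz))
  have hdA : d.snd ∈ A := hp _ (p.dart_snd_mem_support_of_mem_darts hd)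
  have hadj : T.Adj z d.snd := hzd ▸ d.adj
  refine ⟨z, d.snd, hz, hdA, ?_, hadj⟩
  by_contra hB
  exact h2 ⟨⟨d.snd, hdA, hB⟩, hz.trans (Adj.reachable (by simpa using hadj)), rfl⟩

lemma exists_isMaxClique_of_adj {V : Type*} [Finite V] {G : SimpleGraph V} {v w : V}
    (h : G.Adj v w) : ∃ s, IsMaxClique G s ∧ v ∈ s ∧ w ∈ s := by
  obtain ⟨s, hs, hmax⟩ := Finite.exists_le_maximal (p := fun s : Set V => G.IsClique s)
    (a := {v, w}) (by simp [h])
  exact ⟨s, ⟨hmax.1, fun t ht hst => hst.antisymm (hmax.2 ht hst)⟩, hs (by simp), hs (by simp)⟩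

lemma ClawFree.false_of_claw {V : Type*} {G : SimpleGraph V} (hG : ClawFree G) {u v w t : V}
    (huv : G.Adj u v) (huw : G.Adj u w) (hut : G.Adj u t)
    (hvw : ¬ G.Adj v w) (hvt : ¬ G.Adj v t) (hwt : ¬ G.Adj w t)
    (nvw : v ≠ w) (nvt : v ≠ t) (nwt : w ≠ t) : False := by
  refine hG ⟨⟨⟨![u, v, w, t], ?_⟩, ?_⟩⟩
  · intro i j hij
    have := huv.ne; have := huw.ne; have := hut.ne
    fin_cases i <;> fin_cases j <;> simp_all
  · intro i j
    change G.Adj (![u, v, w, t] i) (![u, v, w, t] j) ↔ claw.Adj i j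
    have := huv.symm; have := huw.symm; have := hut.symm
    have := fun h : G.Adj w v => hvw (h.symm); have := fun h : G.Adj t v => hvt (h.symm)
    have := fun h : G.Adj t w => hwt (h.symm)
    fin_cases i <;> fin_cases j <;> simp_all [claw]

/-- One half of the non-crossing property; the other half follows by exchanging `u` and `v`. -/
lemma preconnected_induce_diff {V β : Type*} [Finite V] {G : SimpleGraph V}
    (hclaw : ClawFree G) {T : SimpleGraph β} (hT : T.IsAcyclic)
    {C : β → Set V} (hCinj : Function.Injective C)
    (hCmax : ∀ x : β, IsMaxClique G (C x))
    (hCsurj : ∀ s : Set V, IsMaxClique G s → ∃ x : β, C x = s)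
    (hK : ∀ v : V, (T.induce {x : β | v ∈ C x}).Preconnected) {u v : V} (huv : u ≠ v) :
    (T.induce ({x : β | u ∈ C x} \ {x : β | v ∈ C x})).Preconnected := by
  intro x y
  by_contra hxy
  obtain ⟨x', a, hx, hua, hva, hxa⟩ := exists_adj_inter_of_not_reachable (hK u) x y hxy
  obtain ⟨y', b, hy, hub, hvb, hyb⟩ :=
    exists_adj_inter_of_not_reachable (hK u) y x (fun h => hxy h.symm)
  have hne : x'.1 ≠ y'.1 := by
    intro h
    rw [Subtype.ext h] at hx
    exact hxy (hx.trans hy.symm)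
  obtain ⟨x', hux, hvx⟩ := x'
  obtain ⟨y', huy, hvy⟩ := y'
  simp only [Set.mem_ofPred_eq] at hua hva hub hvb hux hvx huy hvy hxa hyb hne
  -- Distinct maximal cliques are incomparable.
  have key : ∀ {p q : β}, T.Adj p q → ∃ w, w ∈ C p ∧ w ∉ C q := by
    intro p q hpq
    by_contra! h
    exact hpq.ne (hCinj ((hCmax p).2 _ (hCmax q).1 h))
  obtain ⟨w, hwx, hwa⟩ := key hxa
  obtain ⟨t, hty, htb⟩ := key hyb
  have disj : ∀ {p q : β} {r : V}, T.Adj p q → v ∉ C p → v ∈ C q → r ∈ C p → r ∉ C q →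
      ∀ c, ¬ (v ∈ C c ∧ r ∈ C c) := by
    rintro p q r hpq hvp hvq hrp hrq c ⟨hvc, hrc⟩
    obtain ⟨P, hP⟩ := exists_walk_of_preconnected_induce (hK r) (s := c) (t := p) hrc hrp
    obtain ⟨Q, hQ⟩ := exists_walk_of_preconnected_induce (hK v) (s := c) (t := q) hvc hvq
    exact hT.false_of_walks hpq P Q (fun h => hrq (hP _ h)) (fun h => hvp (hQ _ h))
  have dvw := disj hxa hvx hva hwx hwa
  have dvt := disj hyb hvy hvb hty htb
  obtain ⟨R, hR⟩ := exists_walk_of_preconnected_induce (hK v) (s := a) (t := b) hva hvb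
  have htx : t ∉ C x' := by
    intro htx
    obtain ⟨P, hP⟩ := exists_walk_of_preconnected_induce (hK t) (s := x') (t := y') htx hty
    refine hT.false_of_walks hyb P (Walk.cons hxa R) (fun h => htb (hP _ h)) (fun h => ?_)
    rw [Walk.support_cons, List.mem_cons] at h
    exact h.elim (fun h => hne h.symm) (fun h => hvy (hR _ h))
  have dwt : ∀ c, ¬ (w ∈ C c ∧ t ∈ C c) := by
    rintro c ⟨hwc, htc⟩
    obtain ⟨P, hP⟩ := exists_walk_of_preconnected_induce (hK w) (s := c) (t := x') hwc hwx
    obtain ⟨Q, hQ⟩ := exists_walk_of_preconnected_induce (hK t) (s := c) (t := y') htc hty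
    refine hT.false_of_walks hxa P (Q.append (Walk.cons hyb R.reverse))
      (fun h => hwa (hP _ h)) (fun h => ?_)
    rw [Walk.mem_support_append_iff, Walk.support_cons, List.mem_cons, Walk.support_reverse,
      List.mem_reverse] at h
    rcases h with h | h | h
    · exact htx (hQ _ h)
    · exact hne h
    · exact hvx (hR _ h)
  have nadj : ∀ {r s : V}, (∀ c, ¬ (r ∈ C c ∧ s ∈ C c)) → ¬ G.Adj r s := by
    intro r s h hrs
    obtain ⟨S, hS, hr, hs⟩ := exists_isMaxClique_of_adj hrs
    obtain ⟨c, rfl⟩ := hCsurj S hS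
    exact h c ⟨hr, hs⟩
  refine hclaw.false_of_claw ((hCmax a).1 hua hva huv)
    ((hCmax x').1 hux hwx ?_) ((hCmax y').1 huy hty ?_) (nadj dvw) (nadj dvt) (nadj dwt) ?_ ?_ ?_
  · rintro rfl; exact hwa hua
  · rintro rfl; exact htb hub
  · rintro rfl; exact hvx hwx
  · rintro rfl; exact hvy hty
  · rintro rfl; exact htx hwx

/-- in any clique tree of a finite connected claw-free chordal graph,
the family of sets of maximal cliques containing the vertices is pairwise non-crossing. -/
theorem stmt_3 {V β : Type*} [Fintype V] (G : SimpleGraph V)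
    (hconn : G.Connected) (hclaw : ClawFree G) (hchord : Chordal G)
    (T : SimpleGraph β) (hT : T.IsTree)
    (C : β → Set V) (hCinj : Function.Injective C)
    (hCmax : ∀ x : β, IsMaxClique G (C x))
    (hCsurj : ∀ s : Set V, IsMaxClique G s → ∃ x : β, C x = s)
    (hKconn : ∀ v : V, (T.induce {x : β | v ∈ C x}).Connected) :
    ∀ u v : V, u ≠ v →
      NonCrossing T {x : β | u ∈ C x} {x : β | v ∈ C x} := by
  intro u v huv
  exact ⟨preconnected_induce_diff hclaw hT.isAcyclic hCinj hCmax hCsurj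
      (fun v => (hKconn v).preconnected) huv,
    preconnected_induce_diff hclaw hT.isAcyclic hCinj hCmax hCsurj
      (fun v => (hKconn v).preconnected) huv.symm⟩
end

section
/- Let G be a finite connected graph with a clique NC-path-tree model ({P_v}, T). Then every mixed node of T has degree two in T. -/
/-!
Let `x` be mixed, let `P a` have `x` as an internal node with neighbours `y₁ ≠ y₂` on it, and let
`P b` end at `x`. Non-crossing forces any path ending at `x` to contain one of any two neighbours
of `x` lying on a common path: otherwise these two neighbours lie in a set difference that misses
`x`, yet `x` separates them in the tree (`mem_or_mem_of_isPathEnd`). Hence `P b` contains exactly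
one neighbour of `x`, say `y₁`, and every path with `x` internal contains `y₁`.

Suppose `x` has a third neighbour `y₃`. As `G` is connected, the cliques at `x` and `y₃` share a
vertex `c` (`exists_common_vertex`). The path `P c` cannot end at `x`, since it would have to
contain `y₁` or `y₂` besides `y₃`; so it contains both `y₁` and `y₃`. A path ending at `x` now
contains one of `y₁, y₂`, one of `y₁, y₃`, and only one neighbour of `x`, so it contains `y₁`.
Thus every path through `x` contains `y₁`, i.e. the clique at `x` is contained in the clique at
`y₁`, contradicting maximality.
-/

open SimpleGraph

/-! ### Connected sets, paths and separation in forests -/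

/-- In a forest, a vertex `x` separates any two of its neighbours, so no connected set avoiding
`x` contains two of them. -/
theorem eq_of_induce_preconnected {β : Type*} {T : SimpleGraph β} (hT : T.IsAcyclic)
    {S : Set β} (hS : (T.induce S).Preconnected) {x y z : β} (hx : x ∉ S)
    (hy : y ∈ S) (hz : z ∈ S) (hxy : T.Adj x y) (hxz : T.Adj x z) : y = z := by
  classical
  by_contra hne
  obtain ⟨w, -⟩ := (hS ⟨y, hy⟩ ⟨z, hz⟩).exists_isPath
  let w' : T.Walk y z := w.map (Embedding.induce S).toHom
  have hx' : x ∉ w'.support := by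
    intro h
    rw [show w'.support = _ from Walk.support_map _ _, List.mem_map] at h
    obtain ⟨s, -, hs⟩ := h
    exact hx (hs ▸ s.2)
  let p : T.Path y z := w'.toPath
  let q : T.Path y z := ⟨.cons hxy.symm (.cons hxz .nil), by
    simp [Walk.cons_isPath_iff, hxy.ne', hxz.ne, hne]⟩
  have hpq : p = q := (hT.subsingleton_path y z).elim p q
  have hxq : x ∈ (q : T.Walk y z).support := by simp [q]
  rw [← hpq] at hxq
  exact hx' (Walk.support_toPath_subset_support _ hxq)

/-- If `S` has two neighbours of `x`, then a set ending at `x` and not crossing `S` contains one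
of them. -/
theorem mem_or_mem_of_isPathEnd {β : Type*} {T : SimpleGraph β} (hT : T.IsAcyclic)
    {S S' : Set β} (hnc : NonCrossing T S S') {x y z : β} (hx : x ∈ S')
    (hy : y ∈ S) (hz : z ∈ S) (hxy : T.Adj x y) (hxz : T.Adj x z) (hne : y ≠ z) :
    y ∈ S' ∨ z ∈ S' := by
  by_contra! h
  exact hne (eq_of_induce_preconnected hT hnc.1 (fun hx' => hx'.2 hx) ⟨hy, h.1⟩ ⟨hz, h.2⟩ hxy hxz)

theorem exists_two_of_not_isPathEnd {β : Type*} {T : SimpleGraph β} {S : Set β} {x : β}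
    (hx : x ∈ S) (h : ¬ IsPathEnd T S x) :
    ∃ y z, y ∈ S ∧ z ∈ S ∧ T.Adj x y ∧ T.Adj x z ∧ y ≠ z := by
  by_contra! h'
  exact h ⟨hx, fun y hy z hz => h' y z hy.1 hz.1 hy.2 hz.2⟩

/-- A property of nodes that is preserved along all edges of `H` within `S` is constant on a
set `S` inducing a path. -/
theorem InducesPath.iff_of_adj {β : Type*} {H : SimpleGraph β} {S : Set β}
    (hS : InducesPath H S) (Q : β → Prop)
    (hQ : ∀ z ∈ S, ∀ w ∈ S, H.Adj z w → (Q z ↔ Q w)) :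
    ∀ z ∈ S, ∀ w ∈ S, (Q z ↔ Q w) := by
  obtain ⟨n, f, -, rfl, hf⟩ := hS
  have key : ∀ k (hk : k < n + 1), (Q (f ⟨k, hk⟩) ↔ Q (f 0)) := by
    intro k
    induction k with
    | zero => intro hk; rfl
    | succ k ih =>
      intro hk
      rw [← ih (by omega)]
      exact hQ _ ⟨_, rfl⟩ _ ⟨_, rfl⟩ ((hf _ _).2 (Or.inr rfl))
  rintro _ ⟨i, rfl⟩ _ ⟨j, rfl⟩
  exact (key i i.2).trans (key j j.2).symm

/-! ### Adjacent nodes of a clique tree -/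

/-- In a clique tree of a connected graph, adjacent cliques intersect: if not, deleting the edge
between them would split the vertices of `G` into two nonempty parts with no edges in between. -/
theorem exists_common_vertex {V β : Type*} [Finite V] {G : SimpleGraph V} (hconn : G.Connected)
    {T : SimpleGraph β} (hT : T.IsAcyclic) {C : β → Set V}
    (hCmax : ∀ x : β, IsMaxClique G (C x))
    (hCsurj : ∀ s : Set V, IsMaxClique G s → ∃ x : β, C x = s)
    {P : V → Set β} (hP : ∀ (v : V) (x : β), x ∈ P v ↔ v ∈ C x)
    (hpath : ∀ v : V, InducesPath T (P v)) {x y : β} (hxy : T.Adj x y) :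
    ∃ c, x ∈ P c ∧ y ∈ P c := by
  by_contra! hdisj
  have hne : ∀ z, ∃ v, z ∈ P v := by
    intro z
    obtain ⟨v⟩ := hconn.nonempty
    by_contra! h
    have hz : C z = ∅ := Set.eq_empty_of_forall_notMem fun u hu => h u ((hP u z).2 hu)
    have := (hCmax z).2 {v} (by simp) (by simp [hz])
    simp [hz] at this
  -- the side of the edge `s(x, y)` containing `x`
  let Q : β → Prop := fun z => (T.deleteEdges {s(x, y)}).Reachable x z
  have hQx : Q x := Reachable.refl _
  have hQy : ¬ Q y := by
    have := isAcyclic_iff_forall_isBridge.1 hT ((mem_edgeSet T).2 hxy)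
    exact isBridge_iff.1 this
  have hQ : ∀ v, ∀ z ∈ P v, ∀ w ∈ P v, (Q z ↔ Q w) := by
    intro v
    refine (hpath v).iff_of_adj Q fun z hz w hw hzw => ?_
    have hadj : (T.deleteEdges {s(x, y)}).Adj z w := by
      rw [deleteEdges_adj]
      refine ⟨hzw, fun h => ?_⟩
      rcases Sym2.eq_iff.1 (Set.mem_singleton_iff.1 h) with ⟨rfl, rfl⟩ | ⟨rfl, rfl⟩
      · exact hdisj v hz hw
      · exact hdisj v hw hz
    exact ⟨fun h => h.trans hadj.reachable, fun h => h.trans hadj.symm.reachable⟩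
  have hedge : ∀ u v, G.Adj u v → ∃ z, z ∈ P u ∧ z ∈ P v := by
    intro u v huv
    obtain ⟨s, hs, hmax⟩ := Finite.exists_le_maximal (p := fun s : Set V => G.IsClique s)
      (a := {u, v}) (by simp [huv])
    obtain ⟨z, rfl⟩ := hCsurj s
      ⟨hmax.prop, fun t ht hst => Set.Subset.antisymm hst (hmax.le_of_ge ht hst)⟩
    exact ⟨z, (hP u z).2 (hs (by simp)), (hP v z).2 (hs (by simp))⟩
  have hwalk : ∀ u v, G.Walk u v → (∀ z ∈ P u, Q z) → ∀ z ∈ P v, Q z := by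
    intro u v p
    induction p with
    | nil => exact id
    | cons h _ ih =>
      intro hu
      obtain ⟨t, htu, htv⟩ := hedge _ _ h
      exact ih fun z hz => (hQ _ t htv z hz).1 (hu t htu)
  obtain ⟨u, hu⟩ := hne x
  obtain ⟨v, hv⟩ := hne y
  obtain ⟨p⟩ := hconn.preconnected u v
  exact hQy (hwalk u v p (fun z hz => (hQ u x hu z hz).1 hQx) y hv)

/-! ### Mixed nodes -/

/-- in a clique NC-path-tree model, every mixed node has degree two. -/
theorem stmt_5
    {V β : Type*} [Fintype V] (G : SimpleGraph V) (hconn : G.Connected)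
    (T : SimpleGraph β) (hT : T.IsTree)
    (C : β → Set V) (hCinj : Function.Injective C)
    (hCmax : ∀ x : β, IsMaxClique G (C x))
    (hCsurj : ∀ s : Set V, IsMaxClique G s → ∃ x : β, C x = s)
    (P : V → Set β) (hP : ∀ (v : V) (x : β), x ∈ P v ↔ v ∈ C x)
    (hpath : ∀ v : V, InducesPath T (P v))
    (hnc : ∀ u v : V, u ≠ v → NonCrossing T (P u) (P v)) :
    ∀ x : β, IsMixed T P x → (T.neighborSet x).ncard = 2 := by
  intro x ⟨hterm, hjunc⟩
  have hA := hT.isAcyclic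
  simp only [IsTerminal, IsJunction, not_forall, not_not] at hterm hjunc
  obtain ⟨a, hxa, ha⟩ := hterm
  obtain ⟨b, hxb, hb⟩ := hjunc
  -- any path with two neighbours of `x` meets, in one of them, any path ending at `x`
  have key : ∀ u v y z, y ∈ P u → z ∈ P u → T.Adj x y → T.Adj x z → y ≠ z →
      IsPathEnd T (P v) x → y ∈ P v ∨ z ∈ P v := by
    intro u v y z hy hz hxy hxz hyz hv
    by_cases huv : u = v
    · exact Or.inl (huv ▸ hy)
    · exact mem_or_mem_of_isPathEnd hA (hnc u v huv) hv.1 hy hz hxy hxz hyz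
  -- the neighbour of `x` on `P b` is called `y₁`, the other one on `P a` is called `y₂`
  obtain ⟨y₁, y₂, h1a, h2a, hx1, hx2, h12, h1b⟩ : ∃ y₁ y₂, y₁ ∈ P a ∧ y₂ ∈ P a ∧
      T.Adj x y₁ ∧ T.Adj x y₂ ∧ y₁ ≠ y₂ ∧ y₁ ∈ P b := by
    obtain ⟨y, z, hy, hz, hxy, hxz, hyz⟩ := exists_two_of_not_isPathEnd hxa ha
    rcases key a b y z hy hz hxy hxz hyz hb with h | h
    · exact ⟨y, z, hy, hz, hxy, hxz, hyz, h⟩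
    · exact ⟨z, y, hz, hy, hxz, hxy, hyz.symm, h⟩
  have hint : ∀ v, x ∈ P v → ¬ IsPathEnd T (P v) x → y₁ ∈ P v := by
    intro v hxv hv
    obtain ⟨y, z, hy, hz, hxy, hxz, hyz⟩ := exists_two_of_not_isPathEnd hxv hv
    rcases key v b y z hy hz hxy hxz hyz hb with h | h
    · exact hb.2 ⟨h, hxy⟩ ⟨h1b, hx1⟩ ▸ hy
    · exact hb.2 ⟨h, hxz⟩ ⟨h1b, hx1⟩ ▸ hz
  have hnbr : T.neighborSet x = {y₁, y₂} := by
    refine Set.Subset.antisymm (fun y₃ hx3 => ?_) ?_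
    · by_contra h3
      rw [mem_neighborSet] at hx3
      simp only [Set.mem_insert_iff, Set.mem_singleton_iff, not_or] at h3
      obtain ⟨h31, h32⟩ := h3
      obtain ⟨c, hxc, h3c⟩ := exists_common_vertex hconn hA hCmax hCsurj hP hpath hx3
      have hc : ¬ IsPathEnd T (P c) x := by
        intro hc
        rcases key a c y₁ y₂ h1a h2a hx1 hx2 h12 hc with h | h
        · exact h31 (hc.2 ⟨h3c, hx3⟩ ⟨h, hx1⟩)
        · exact h32 (hc.2 ⟨h3c, hx3⟩ ⟨h, hx2⟩)
      have h1c := hint c hxc hc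
      have hsub : C x ⊆ C y₁ := by
        intro v hv
        rw [← hP] at hv ⊢
        by_cases hve : IsPathEnd T (P v) x
        · rcases key a v y₁ y₂ h1a h2a hx1 hx2 h12 hve with h | h2
          · exact h
          rcases key c v y₁ y₃ h1c h3c hx1 hx3 (Ne.symm h31) hve with h | h3
          · exact h
          exact absurd (hve.2 ⟨h3, hx3⟩ ⟨h2, hx2⟩) h32
        · exact hint v hv hve
      exact hx1.ne (hCinj ((hCmax x).2 _ (hCmax y₁).1 hsub))
    · rintro y (rfl | rfl)
      · exact hx1
      · exact hx2
  rw [hnbr, Set.ncard_pair h12]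
end

section
/- Let G be a finite connected graph with a clique NC-path-tree model ({P_v}, T). Then every junction node x of T has degree exactly three in T, and all three neighbors of x in T are terminals. -/
/-!
Fix a junction `x` and, for `v ∈ C x`, let `e v` be the pair of neighbours of `x` lying on `P v`.
If `e u` and `e v` were disjoint, `x` would separate the two elements of `e u` inside
`P u \ P v`; so the pairs `e v` pairwise intersect (`meet`). They have no common element `a`,
because otherwise `C x ⊆ C a`, against maximality (`exists_not_mem`). A pairwise intersecting family
of pairs without a common element is a triangle `{a,b}, {b,c}, {a,c}`. Since `G` is connected, every
tree edge `xy` has `C x ∩ C y ≠ ∅` (`exists_common`), so every neighbour `y` of `x` lies in some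
`e v`, and the neighbours of `x` are exactly `a, b, c`.

To see that `a` is a terminal, the main point (`no_extension`) is that no path through `x` and `a`
continues past `a` to a further node `a'`. Some `u ∈ C a` avoids `a'`. It passes through `x`, since
otherwise `a` separates `x` from `a'` in `P v \ P u`. Comparing the paths through `a, b` with those
through `a, c`, one that continues to `a'` and one of the other kind that does not would cross, as
the edge `xa` separates `a'` from the third neighbour (`sep_edge`). A path having `a` as an
internal node but missing `x` forces a path through `x` and `a` to continue past `a` (`meet` at `a`).
-/

open SimpleGraph

/-- In an acyclic graph, two distinct neighbours of `q` are not joined by a walk avoiding `q`. -/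
lemma sep_walk {β : Type*} {T : SimpleGraph β} (hT : T.IsAcyclic) {p q r : β}
    (hp : T.Adj q p) (hr : T.Adj q r) (hpr : p ≠ r) (w : T.Walk p r) (hq : q ∉ w.support) :
    False := by
  classical
  have h1 : w.bypass.IsPath := w.bypass_isPath
  have h2 : q ∉ w.bypass.support := fun h => hq (w.support_bypass_subset_support h)
  have h3 : (Walk.cons hp.symm (Walk.cons hr Walk.nil)).IsPath := by
    simp [Walk.cons_isPath_iff, hr.ne, hp.ne', hpr]
  have h4 := (hT.subsingleton_path _ _).elim ⟨_, h1⟩ ⟨_, h3⟩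
  rw [Subtype.mk.injEq] at h4
  rw [h4] at h2
  simp at h2

lemma walk_of_induce {β : Type*} {T : SimpleGraph β} {S : Set β}
    (h : (T.induce S).Preconnected) {p q : β} (hp : p ∈ S) (hq : q ∈ S) :
    ∃ w : T.Walk p q, ∀ z ∈ w.support, z ∈ S := by
  obtain ⟨w⟩ := h ⟨p, hp⟩ ⟨q, hq⟩
  refine ⟨w.map (Embedding.induce S).toHom, ?_⟩
  intro z hz
  obtain ⟨y, -, rfl⟩ := List.mem_map.1 ((Walk.support_map _ w) ▸ hz)
  exact y.2

lemma InducesPath.walk {β : Type*} {T : SimpleGraph β} {S : Set β}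
    (h : InducesPath T S) {p q : β} (hp : p ∈ S) (hq : q ∈ S) :
    ∃ w : T.Walk p q, ∀ z ∈ w.support, z ∈ S := by
  obtain ⟨n, f, -, hS, hf⟩ := h
  have key : ∀ (k : ℕ) (hk : k < n + 1),
      ∃ w : T.Walk (f 0) (f ⟨k, hk⟩), ∀ z ∈ w.support, z ∈ S := by
    intro k
    induction k with
    | zero =>
      intro hk
      refine ⟨Walk.nil, fun z hz => ?_⟩
      rw [List.mem_singleton.1 hz, ← hS]
      exact ⟨_, rfl⟩
    | succ k ih =>
      intro hk
      obtain ⟨w, hw⟩ := ih (by omega)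
      have hadj : T.Adj (f ⟨k, by omega⟩) (f ⟨k + 1, hk⟩) := (hf _ _).2 (Or.inl rfl)
      refine ⟨w.concat hadj, fun z hz => ?_⟩
      rw [Walk.support_concat, List.mem_append, List.mem_singleton] at hz
      rcases hz with hz | rfl
      · exact hw z hz
      · rw [← hS]
        exact ⟨_, rfl⟩
  rw [← hS] at hp hq
  obtain ⟨i, rfl⟩ := hp
  obtain ⟨j, rfl⟩ := hq
  obtain ⟨w1, h1⟩ := key i i.2
  obtain ⟨w2, h2⟩ := key j j.2
  refine ⟨w1.reverse.append w2, fun z hz => ?_⟩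
  rw [Walk.mem_support_append_iff, Walk.support_reverse, List.mem_reverse] at hz
  exact hz.elim (h1 z) (h2 z)

/-- A node of an induced path has at most two neighbours on it. -/
lemma InducesPath.deg_le_two {β : Type*} {T : SimpleGraph β} {S : Set β}
    (h : InducesPath T S) {x p q r : β} (hx : x ∈ S) (hp : p ∈ S) (hq : q ∈ S) (hr : r ∈ S)
    (hxp : T.Adj x p) (hxq : T.Adj x q) (hxr : T.Adj x r) : p = q ∨ p = r ∨ q = r := by
  obtain ⟨n, f, -, rfl, hf⟩ := h
  obtain ⟨i, rfl⟩ := hx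
  obtain ⟨j, rfl⟩ := hp
  obtain ⟨k, rfl⟩ := hq
  obtain ⟨l, rfl⟩ := hr
  rw [hf] at hxp hxq hxr
  have : j = k ∨ j = l ∨ k = l := by
    simp only [Fin.ext_iff]
    omega
  rcases this with h | h | h <;> simp [h]

/-- If `S'` contains `q` and does not cross `S`, then two neighbours of `q` in `S` cannot both be
missed by `S'`. Non-crossing is assumed only for `S ≠ S'`, as the claim is trivial for equal sets. -/
lemma meet {β : Type*} {T : SimpleGraph β} (hT : T.IsAcyclic) {S S' : Set β}
    (hnc : S ≠ S' → NonCrossing T S S') {p q r : β} (hq : q ∈ S') (hp : p ∈ S) (hr : r ∈ S)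
    (hqp : T.Adj q p) (hqr : T.Adj q r) (hpr : p ≠ r) : p ∈ S' ∨ r ∈ S' := by
  by_contra! hcon
  obtain ⟨w, hw⟩ := walk_of_induce (hnc (by rintro rfl; exact hcon.1 hp)).1
    ⟨hp, hcon.1⟩ ⟨hr, hcon.2⟩
  exact sep_walk hT hqp hqr hpr w fun h => (hw q h).2 hq

/-- The edge analogue of `meet`: along a path `b, x, a, a'` whose edge `xa` lies in the second set,
the ends `b` and `a'` cannot both lie in the first set and outside the second. -/
lemma sep_edge {β : Type*} {T : SimpleGraph β} (hT : T.IsAcyclic) {S S' : Set β}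
    (hnc : S ≠ S' → NonCrossing T S S') {b x a a' : β} (hx : x ∈ S') (hb : b ∈ S) (ha' : a' ∈ S)
    (hb' : b ∉ S') (ha'' : a' ∉ S') (hxb : T.Adj x b) (hxa : T.Adj x a) (haa' : T.Adj a a')
    (hab : a ≠ b) : False := by
  obtain ⟨w, hw⟩ := walk_of_induce (hnc (by rintro rfl; exact hb' hb)).1
    ⟨hb, hb'⟩ ⟨ha', ha''⟩
  refine sep_walk hT hxb hxa hab.symm (w.concat haa'.symm) fun h => ?_
  rw [Walk.support_concat, List.mem_append, List.mem_singleton] at h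
  exact h.elim (fun h => (hw x h).2 hx) hxa.ne

lemma IsMaxClique.nonempty {V : Type*} [Nonempty V] {G : SimpleGraph V} {s : Set V}
    (h : IsMaxClique G s) : s.Nonempty := by
  rw [Set.nonempty_iff_ne_empty]
  rintro rfl
  obtain ⟨v⟩ := ‹Nonempty V›
  have := h.2 {v} (by simp) (by simp)
  exact (Set.singleton_nonempty v).ne_empty this.symm

lemma exists_maxClique {V : Type*} [Finite V] {G : SimpleGraph V} {s : Set V}
    (h : G.IsClique s) : ∃ t, IsMaxClique G t ∧ s ⊆ t := by
  obtain ⟨t, hst, ht⟩ := Set.Finite.exists_le_maximal (Set.toFinite {t : Set V | G.IsClique t}) h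
  exact ⟨t, ⟨ht.1, fun r hr htr => htr.antisymm (ht.2 hr htr)⟩, hst⟩

/-- Maximality in the form used throughout: the clique at `x` is not contained in any other. -/
lemma exists_not_mem {V β : Type*} {G : SimpleGraph V} {C : β → Set V}
    (hCinj : Function.Injective C) (hCmax : ∀ x : β, IsMaxClique G (C x)) {x y : β} (hxy : x ≠ y) :
    ∃ v ∈ C x, v ∉ C y := by
  by_contra! h
  exact hxy (hCinj ((hCmax x).2 _ (hCmax y).1 h))

/-- In a clique tree of a connected graph, the cliques at the ends of a tree edge intersect. -/
lemma exists_common {V β : Type*} [Finite V] {G : SimpleGraph V} (hconn : G.Connected)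
    {T : SimpleGraph β} (hT : T.IsAcyclic) {C : β → Set V}
    (hCmax : ∀ x : β, IsMaxClique G (C x))
    (hCsurj : ∀ s : Set V, IsMaxClique G s → ∃ x : β, C x = s)
    {P : V → Set β} (hP : ∀ (v : V) (x : β), x ∈ P v ↔ v ∈ C x)
    (hpath : ∀ v : V, InducesPath T (P v)) {x y : β} (hxy : T.Adj x y) :
    ∃ v, x ∈ P v ∧ y ∈ P v := by
  classical
  by_contra! hcon
  have := hconn.nonempty
  -- the component of `y` in `T - x`, and the vertices of `G` occurring in it
  let D : Set β := {z | ∃ w : T.Walk z y, x ∉ w.support}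
  let A : Set V := {v | ∃ z ∈ D, z ∈ P v}
  have hyD : y ∈ D := ⟨Walk.nil, by simpa using hxy.ne⟩
  have hxA : ∀ v ∈ A, x ∉ P v := by
    rintro v ⟨z, ⟨w, hw⟩, hz⟩ hx
    obtain ⟨w', hw'⟩ := (hpath v).walk hz hx
    have h1 : (w.bypass.concat hxy.symm).IsPath :=
      w.bypass_isPath.concat (fun h => hw (w.support_bypass_subset_support h)) _
    have h2 := (hT.subsingleton_path _ _).elim ⟨_, h1⟩ ⟨_, w'.bypass_isPath⟩
    rw [Subtype.mk.injEq] at h2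
    have h3 : y ∈ w'.bypass.support := by
      rw [← h2, Walk.support_concat]
      simp
    exact hcon v hx (hw' y (w'.support_bypass_subset_support h3))
  obtain ⟨u, hu⟩ := (hCmax y).nonempty
  obtain ⟨v, hv⟩ := (hCmax x).nonempty
  have huA : u ∈ A := ⟨y, hyD, (hP _ _).2 hu⟩
  have hvA : v ∉ A := fun h => hxA v h ((hP _ _).2 hv)
  obtain ⟨w⟩ := hconn.preconnected u v
  obtain ⟨d, -, hd1, hd2⟩ := w.exists_boundary_dart A huA hvA
  obtain ⟨t, ht, hst⟩ := exists_maxClique (G := G) (s := {d.fst, d.snd})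
    (by simp [d.adj])
  obtain ⟨n, rfl⟩ := hCsurj t ht
  have hn1 : n ∈ P d.fst := (hP _ _).2 (hst (by simp))
  have hn2 : n ∈ P d.snd := (hP _ _).2 (hst (by simp))
  refine hd2 ⟨n, ?_, hn2⟩
  have hx := hxA _ hd1
  obtain ⟨z, ⟨w, hw⟩, hz⟩ := hd1
  obtain ⟨w', hw'⟩ := (hpath d.fst).walk hn1 hz
  refine ⟨w'.append w, fun h => ?_⟩
  rw [Walk.mem_support_append_iff] at h
  exact h.elim (fun h => hx (hw' x h)) hw

/-- If some path contains `x` and its neighbours `a`, `c`, then no path through `x`, `a` and another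
neighbour `b` of `x` continues past `a` to a node `a' ≠ x`. -/
lemma no_extension {V β : Type*} {G : SimpleGraph V} {T : SimpleGraph β} (hT : T.IsAcyclic)
    {C : β → Set V} (hCinj : Function.Injective C) (hCmax : ∀ x : β, IsMaxClique G (C x))
    {P : V → Set β} (hP : ∀ (v : V) (x : β), x ∈ P v ↔ v ∈ C x)
    (hpath : ∀ v : V, InducesPath T (P v))
    (hnc : ∀ u v : V, P u ≠ P v → NonCrossing T (P u) (P v))
    {x a b c : β} (hxa : T.Adj x a) (hxb : T.Adj x b) (hxc : T.Adj x c)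
    (hab : a ≠ b) (hac : a ≠ c) (hbc : b ≠ c) {w : V}
    (hxw : x ∈ P w) (haw : a ∈ P w) (hcw : c ∈ P w)
    {v : V} {a' : β} (hxv : x ∈ P v) (hbv : b ∈ P v)
    (haa' : T.Adj a a') (ha'x : a' ≠ x) (ha'v : a' ∈ P v) : False := by
  obtain ⟨u, hua, hua'⟩ := exists_not_mem hCinj hCmax haa'.ne
  rw [← hP] at hua hua'
  have hxu : x ∈ P u :=
    (meet hT (hnc v u) hua hxv ha'v hxa.symm haa' ha'x.symm).resolve_right hua'
  have hbw : b ∉ P w := fun h => by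
    have := (hpath w).deg_le_two hxw haw h hcw hxa hxb hxc
    tauto
  -- `w` also continues past `a`, since `v` does
  have ha'w : a' ∈ P w := by
    by_contra h
    exact sep_edge hT (hnc v w) hxw hbv ha'v hbw h hxb hxa haa' hab
  by_cases hcu : c ∈ P u
  · have hbu : b ∉ P u := fun h => by
      have := (hpath u).deg_le_two hxu hua h hcu hxa hxb hxc
      tauto
    exact sep_edge hT (hnc v u) hxu hbv ha'v hbu hua' hxb hxa haa' hab
  · exact sep_edge hT (hnc w u) hxu hcw ha'w hcu hua' hxc hxa haa' hac

/-- If each pair of the neighbours `a`, `b`, `c` of `x` lies on a common path through `x`, then `a`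
is a terminal. -/
lemma terminal_of_triangle {V β : Type*} {G : SimpleGraph V} {T : SimpleGraph β} (hT : T.IsAcyclic)
    {C : β → Set V} (hCinj : Function.Injective C) (hCmax : ∀ x : β, IsMaxClique G (C x))
    {P : V → Set β} (hP : ∀ (v : V) (x : β), x ∈ P v ↔ v ∈ C x)
    (hpath : ∀ v : V, InducesPath T (P v))
    (hnc : ∀ u v : V, P u ≠ P v → NonCrossing T (P u) (P v))
    {x a b c : β} (hxa : T.Adj x a) (hxb : T.Adj x b) (hxc : T.Adj x c)
    (hab : a ≠ b) (hac : a ≠ c) (hbc : b ≠ c) {v₀ v₁ v₂ : V}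
    (hx₀ : x ∈ P v₀) (ha₀ : a ∈ P v₀) (hb₀ : b ∈ P v₀)
    (hb₁ : b ∈ P v₁) (hc₁ : c ∈ P v₁)
    (hx₂ : x ∈ P v₂) (ha₂ : a ∈ P v₂) (hc₂ : c ∈ P v₂) : IsTerminal T P a := by
  have key : ∀ v : V, x ∈ P v → ∀ a' ∈ P v, T.Adj a a' → a' = x := by
    intro v hxv a' ha'v haa'
    by_contra hne
    rcases meet hT (hnc v₁ v) hxv hb₁ hc₁ hxb hxc hbc with hbv | hcv
    · exact no_extension hT hCinj hCmax hP hpath hnc hxa hxb hxc hab hac hbc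
        hx₂ ha₂ hc₂ hxv hbv haa' hne ha'v
    · exact no_extension hT hCinj hCmax hP hpath hnc hxa hxc hxb hac hab hbc.symm
        hx₀ ha₀ hb₀ hxv hcv haa' hne ha'v
  rintro v hav
  refine ⟨hav, ?_⟩
  rintro p ⟨hp, hap⟩ q ⟨hq, haq⟩
  by_cases hxv : x ∈ P v
  · rw [key v hxv p hp hap, key v hxv q hq haq]
  · by_contra hpq
    rcases meet hT (hnc v v₀) ha₀ hp hq hap haq hpq with h | h
    · exact hxv (key v₀ hx₀ p h hap ▸ hp)
    · exact hxv (key v₀ hx₀ q h haq ▸ hq)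

/-- in a clique NC-path-tree model, every junction has degree exactly three
and all its neighbours are terminals. -/
theorem stmt_6
    {V β : Type*} [Fintype V] (G : SimpleGraph V) (hconn : G.Connected)
    (T : SimpleGraph β) (hT : T.IsTree)
    (C : β → Set V) (hCinj : Function.Injective C)
    (hCmax : ∀ x : β, IsMaxClique G (C x))
    (hCsurj : ∀ s : Set V, IsMaxClique G s → ∃ x : β, C x = s)
    (P : V → Set β) (hP : ∀ (v : V) (x : β), x ∈ P v ↔ v ∈ C x)
    (hpath : ∀ v : V, InducesPath T (P v))
    (hnc : ∀ u v : V, u ≠ v → NonCrossing T (P u) (P v)) :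
    ∀ x : β, IsJunction T P x →
      (T.neighborSet x).ncard = 3 ∧ ∀ y ∈ T.neighborSet x, IsTerminal T P y := by
  intro x hx
  have hA := hT.isAcyclic
  replace hnc : ∀ u v : V, P u ≠ P v → NonCrossing T (P u) (P v) :=
    fun u v h => hnc u v fun e => h (e ▸ rfl)
  have := hconn.nonempty
  have two : ∀ v, x ∈ P v → ∃ p q, p ∈ P v ∧ q ∈ P v ∧ T.Adj x p ∧ T.Adj x q ∧ p ≠ q := by
    intro v hv
    have h : ¬ {y ∈ P v | T.Adj x y}.Subsingleton := fun h => hx v hv ⟨hv, h⟩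
    rw [Set.not_subsingleton_iff] at h
    obtain ⟨p, ⟨hp, hxp⟩, q, ⟨hq, hxq⟩, hpq⟩ := h
    exact ⟨p, q, hp, hq, hxp, hxq, hpq⟩
  obtain ⟨v₀, h₀⟩ := (hCmax x).nonempty
  have hx₀ := (hP _ _).2 h₀
  obtain ⟨a, b, ha₀, hb₀, hxa, hxb, hab⟩ := two v₀ hx₀
  obtain ⟨v₁, hx₁, ha₁⟩ := exists_not_mem hCinj hCmax hxa.ne
  obtain ⟨v₂, hx₂, hb₂⟩ := exists_not_mem hCinj hCmax hxb.ne
  rw [← hP] at hx₁ hx₂ ha₁ hb₂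
  have hb₁ : b ∈ P v₁ := (meet hA (hnc v₀ v₁) hx₁ ha₀ hb₀ hxa hxb hab).resolve_left ha₁
  have ha₂ : a ∈ P v₂ := (meet hA (hnc v₀ v₂) hx₂ ha₀ hb₀ hxa hxb hab).resolve_right hb₂
  obtain ⟨c, hc₁, hxc, hbc⟩ : ∃ c ∈ P v₁, T.Adj x c ∧ b ≠ c := by
    obtain ⟨p, q, hp, hq, hxp, hxq, hpq⟩ := two v₁ hx₁
    by_cases h : b = p
    · exact ⟨q, hq, hxq, h ▸ hpq⟩
    · exact ⟨p, hp, hxp, h⟩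
  have hac : a ≠ c := fun h => ha₁ (h ▸ hc₁)
  have hc₂ : c ∈ P v₂ := (meet hA (hnc v₁ v₂) hx₂ hb₁ hc₁ hxb hxc hbc).resolve_left hb₂
  have hN : T.neighborSet x = {a, b, c} := by
    ext y
    simp only [mem_neighborSet, Set.mem_insert_iff, Set.mem_singleton_iff]
    refine ⟨fun hxy => ?_, ?_⟩
    · obtain ⟨v, hxv, hyv⟩ := exists_common hconn hA hCmax hCsurj hP hpath hxy
      -- `P v` meets each side of the triangle, hence contains two of `a, b, c`
      have m₀ := meet hA (hnc v₀ v) hxv ha₀ hb₀ hxa hxb hab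
      have m₁ := meet hA (hnc v₁ v) hxv hb₁ hc₁ hxb hxc hbc
      have m₂ := meet hA (hnc v₂ v) hxv ha₂ hc₂ hxa hxc hac
      have d₀ := fun h h' => (hpath v).deg_le_two hxv hyv h h' hxy hxa hxb
      have d₁ := fun h h' => (hpath v).deg_le_two hxv hyv h h' hxy hxb hxc
      have d₂ := fun h h' => (hpath v).deg_le_two hxv hyv h h' hxy hxa hxc
      tauto
    · rintro (rfl | rfl | rfl) <;> assumption
  refine ⟨?_, ?_⟩
  · rw [hN, Set.ncard_eq_three]
    exact ⟨a, b, c, hab, hac, hbc, rfl⟩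
  · rw [hN]
    rintro y (rfl | rfl | rfl)
    · exact terminal_of_triangle hA hCinj hCmax hP hpath hnc hxa hxb hxc hab hac hbc
        hx₀ ha₀ hb₀ hb₁ hc₁ hx₂ ha₂ hc₂
    · exact terminal_of_triangle hA hCinj hCmax hP hpath hnc hxb hxa hxc hab.symm hbc hac
        hx₀ hb₀ ha₀ ha₂ hc₂ hx₁ hb₁ hc₁
    · exact terminal_of_triangle hA hCinj hCmax hP hpath hnc hxc hxa hxb hac.symm hbc.symm hab
        hx₂ hc₂ ha₂ ha₀ hb₀ hx₁ hc₁ hb₁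
end

section
/- Let G be a finite connected graph with a clique NC-path-tree model ({P_v}, T), and suppose T has a junction node x. Then G contains an induced subgraph isomorphic to the 3-sun; moreover, if G is twin-free, then the maximal clique G_x has exactly three vertices. -/
/-!
Fix the junction `x`. Deleting `x` from the tree `T` leaves one branch for each neighbour of `x`
(`Avoids.eq_of_adj`), and since every path through `x` has `x` as an internal node, each `v ∈ C x`
determines the pair of neighbours of `x` lying on `P v` (`exists_nbr_pair`).

If `P u` and `P v` both pass through `x`, then `P u \ P v` is connected and misses `x`, so it lies
in a single branch (`not_two_branches`). Hence the pairs of any two members of `C x` intersect. The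
pairs have no common element `a`, as otherwise `C x ⊆ C a`, against maximality. So the pairs that
occur are exactly the three sides `{a, b}`, `{b, c}`, `{a, c}` of a triangle (`exists_triangle`).

*The 3-sun.* Take one vertex of `C x` for each of the three pairs; these form the triangle. By
maximality there is a vertex in `C b \ C x`; its path contains `b` and avoids `x`, so it lies in the
branch of `b`, and this vertex is adjacent to both triangle vertices whose pair contains `b` but not
to the third. The vertices chosen in this way for `a`, `b`, `c` live in different branches, so they
are pairwise nonadjacent.

*Twins.* If `P u` has pair `{a, b}` and `P v` has pair `{b, c}`, then `P u \ P v` contains `a`, so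
it cannot meet the branch of `b`; by symmetry the two paths coincide on that branch
(`branch_subset`). Hence two members of `C x` with the same pair have the same path and are twins,
and in a twin-free graph each of the three pairs is realised once.
-/

open SimpleGraph

/-! ### Branches of a tree at a node -/

/-- `Avoids T x s t`: some walk of `T` from `s` to `t` misses `x`, i.e. `s` and `t` lie in the same
branch of `T` at `x`. -/
def Avoids {β : Type*} (T : SimpleGraph β) (x s t : β) : Prop :=
  ∃ w : T.Walk s t, x ∉ w.support

section Branches

variable {β : Type*} {T : SimpleGraph β} {x : β}

theorem Avoids.symm {s t : β} (h : Avoids T x s t) : Avoids T x t s := by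
  obtain ⟨w, hw⟩ := h
  exact ⟨w.reverse, by simpa using hw⟩

theorem Avoids.trans {s t r : β} (h : Avoids T x s t) (h' : Avoids T x t r) : Avoids T x s r := by
  obtain ⟨w, hw⟩ := h
  obtain ⟨w', hw'⟩ := h'
  exact ⟨w.append w', by simp [SimpleGraph.Walk.mem_support_append_iff, hw, hw']⟩

theorem Avoids.refl {s : β} (h : s ≠ x) : Avoids T x s s :=
  ⟨.nil, by simpa using h.symm⟩

/-- Distinct neighbours of `x` lie in distinct branches at `x`. -/
theorem Avoids.eq_of_adj (hT : T.IsTree) {a b : β} (ha : T.Adj x a) (hb : T.Adj x b)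
    (h : Avoids T x a b) : a = b := by
  classical
  obtain ⟨w, hw⟩ := h
  have hp : (SimpleGraph.Walk.cons ha w.toPath.1).IsPath := by
    rw [SimpleGraph.Walk.cons_isPath_iff]
    exact ⟨w.toPath.2, fun h => hw (w.support_toPath_subset_support h)⟩
  have hq : (SimpleGraph.Walk.cons hb .nil : T.Walk x b).IsPath := by
    simp [SimpleGraph.Walk.cons_isPath_iff, hb.ne]
  have := congrArg (fun p : T.Path x b => p.1.snd)
    ((hT.isAcyclic.subsingleton_path x b).elim ⟨_, hp⟩ ⟨_, hq⟩)
  simpa using this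

/-- A connected node set missing `x` lies in a single branch at `x`. -/
theorem avoids_of_preconnected {S : Set β} (hS : (T.induce S).Preconnected) (hx : x ∉ S)
    {s t : β} (hs : s ∈ S) (ht : t ∈ S) : Avoids T x s t := by
  obtain ⟨w⟩ := hS ⟨s, hs⟩ ⟨t, ht⟩
  refine ⟨w.map (SimpleGraph.Embedding.induce S).toHom, fun h => ?_⟩
  erw [SimpleGraph.Walk.support_map, List.mem_map] at h
  obtain ⟨y, -, hy⟩ := h
  exact hx (hy ▸ y.2)

/-- In a connected node set containing `x`, every other node lies in the branch of some neighbour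
of `x` that belongs to the set. -/
theorem exists_adj_avoids {S : Set β} (hS : (T.induce S).Preconnected) (hx : x ∈ S)
    {z : β} (hz : z ∈ S) (hne : z ≠ x) : ∃ a ∈ S, T.Adj x a ∧ Avoids T x z a := by
  obtain ⟨w, hw⟩ := (hS ⟨x, hx⟩ ⟨z, hz⟩).exists_isPath
  cases w with
  | nil => exact absurd rfl hne
  | @cons _ a _ h p =>
    rw [SimpleGraph.Walk.cons_isPath_iff] at hw
    refine ⟨a, a.2, by simpa using h, Avoids.symm
      ⟨p.map (SimpleGraph.Embedding.induce S).toHom, fun hm => hw.2 ?_⟩⟩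
    erw [SimpleGraph.Walk.support_map, List.mem_map] at hm
    obtain ⟨y, hy, hyx⟩ := hm
    have : y = ⟨x, hx⟩ := Subtype.ext hyx
    exact this ▸ hy

theorem InducesPath.preconnected {S : Set β} (h : InducesPath T S) :
    (T.induce S).Preconnected := by
  obtain ⟨n, f, -, rfl, hadj⟩ := h
  let φ : SimpleGraph.pathGraph (n + 1) →g T.induce (Set.range f) :=
    { toFun := fun i => ⟨f i, i, rfl⟩
      map_rel' := by
        intro i j hij
        rw [SimpleGraph.pathGraph_adj] at hij
        exact (hadj i j).2 hij }
  rintro ⟨_, i, rfl⟩ ⟨_, j, rfl⟩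
  exact ((SimpleGraph.pathGraph_connected n).preconnected i j).map φ

/-- An internal node of a path has exactly two neighbours on it. -/
theorem exists_nbr_pair {S : Set β} (h : InducesPath T S) (hx : x ∈ S)
    (hend : ¬ IsPathEnd T S x) :
    ∃ a b, a ≠ b ∧ T.Adj x a ∧ T.Adj x b ∧ ∀ y, T.Adj x y → (y ∈ S ↔ y = a ∨ y = b) := by
  have hns : ¬ {y ∈ S | T.Adj x y}.Subsingleton := fun h' => hend ⟨hx, h'⟩
  rw [Set.not_subsingleton_iff] at hns
  obtain ⟨a, ⟨haS, ha⟩, b, ⟨hbS, hb⟩, hab⟩ := hns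
  refine ⟨a, b, hab, ha, hb, fun y hy => ⟨fun hyS => ?_, ?_⟩⟩
  · obtain ⟨n, f, -, rfl, hadj⟩ := h
    obtain ⟨i, rfl⟩ := hx
    obtain ⟨j, rfl⟩ := haS
    obtain ⟨k, rfl⟩ := hbS
    obtain ⟨l, rfl⟩ := hyS
    rw [hadj] at ha hb hy
    have hjk : j.val ≠ k.val := fun h => hab (by rw [Fin.ext h])
    have : l.val = j.val ∨ l.val = k.val := by omega
    rcases this with h | h
    · left; rw [Fin.ext h]
    · right; rw [Fin.ext h]
  · rintro (rfl | rfl) <;> assumption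

/-- If `x ∈ S'`, a connected difference `S \ S'` meets at most one branch at `x`. -/
theorem not_two_branches (hT : T.IsTree) {S S' : Set β} (hS : (T.induce (S \ S')).Preconnected)
    (hx : x ∈ S') {a b p q : β} (ha : T.Adj x a) (hb : T.Adj x b) (hab : a ≠ b)
    (hp : p ∈ S \ S') (hq : q ∈ S \ S') (hpa : Avoids T x p a) (hqb : Avoids T x q b) : False :=
  hab <| Avoids.eq_of_adj hT ha hb <|
    hpa.symm.trans ((avoids_of_preconnected hS (fun h => h.2 hx) hp hq).trans hqb)

/-- Let `S \ S'` be connected with `x ∈ S'`. If `S \ S'` contains a neighbour `a` of `x`, then on the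
branch of any other neighbour `b` the set `S` is contained in `S'`. This applies to non-crossing
paths whose neighbour pairs at `x` are `{a, b}` and `{b, c}`. -/
theorem branch_subset (hT : T.IsTree) {S S' : Set β} (hS : (T.induce (S \ S')).Preconnected)
    (hx : x ∈ S') {a b : β} (ha : T.Adj x a) (hb : T.Adj x b) (hab : a ≠ b)
    (haS : a ∈ S) (haS' : a ∉ S') {z : β} (hz : z ∈ S) (hzb : Avoids T x z b) : z ∈ S' := by
  by_contra hz'
  exact not_two_branches hT hS hx ha hb hab ⟨haS, haS'⟩ ⟨hz, hz'⟩ (Avoids.refl ha.ne') hzb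

end Branches

/-! ### Cliques and the 3-sun -/

/-- Every edge of a finite graph extends to a maximal clique, so adjacency is read off from the
maximal cliques. -/
theorem adj_iff_common_clique {V β : Type*} [Fintype V] {G : SimpleGraph V} {C : β → Set V}
    (hCmax : ∀ x : β, IsMaxClique G (C x))
    (hCsurj : ∀ s : Set V, IsMaxClique G s → ∃ x : β, C x = s) {u v : V} :
    G.Adj u v ↔ u ≠ v ∧ ∃ z, u ∈ C z ∧ v ∈ C z := by
  constructor
  · intro h
    have hcl : G.IsClique {u, v} := by
      rw [SimpleGraph.isClique_pair]; exact fun _ => h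
    obtain ⟨s, hs, hmax⟩ := (Set.toFinite {s : Set V | G.IsClique s}).exists_le_maximal hcl
    obtain ⟨z, rfl⟩ := hCsurj s ⟨hmax.prop, fun t ht hst => hst.antisymm (hmax.le_of_ge ht hst)⟩
    exact ⟨h.ne, z, hs (by simp), hs (by simp)⟩
  · rintro ⟨hne, z, hu, hv⟩
    exact (hCmax z).1 hu hv hne

theorem exists_threeSun {V : Type*} {G : SimpleGraph V} (c₀ c₁ c₂ u₃ u₄ u₅ : V)
    (h01 : G.Adj c₀ c₁) (h02 : G.Adj c₀ c₂) (h12 : G.Adj c₁ c₂)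
    (h30 : G.Adj u₃ c₀) (h31 : G.Adj u₃ c₁) (h41 : G.Adj u₄ c₁) (h42 : G.Adj u₄ c₂)
    (h52 : G.Adj u₅ c₂) (h50 : G.Adj u₅ c₀)
    (n32 : ¬ G.Adj u₃ c₂) (n40 : ¬ G.Adj u₄ c₀) (n51 : ¬ G.Adj u₅ c₁)
    (n34 : ¬ G.Adj u₃ u₄) (n45 : ¬ G.Adj u₄ u₅) (n35 : ¬ G.Adj u₃ u₅) :
    Nonempty (threeSun ↪g G) := by
  have hadj : ∀ i j : Fin 6, G.Adj (![c₀, c₁, c₂, u₃, u₄, u₅] i) (![c₀, c₁, c₂, u₃, u₄, u₅] j) ↔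
      threeSun.Adj i j := by
    intro i j
    fin_cases i <;> fin_cases j <;>
      simp [threeSun, h01, h02, h12, h30, h31, h41, h42, h52, h50, n32, n40, n51, n34, n45, n35,
        h01.symm, h02.symm, h12.symm, h30.symm, h31.symm, h41.symm, h42.symm, h52.symm, h50.symm,
        G.adj_comm _ u₃, G.adj_comm _ u₄, G.adj_comm _ u₅]
  -- The 3-sun has no two vertices with equal open neighbourhoods, so injectivity is automatic.
  have hsep : ∀ i j : Fin 6, (∀ k, threeSun.Adj i k ↔ threeSun.Adj j k) → i = j := by
    intro i j h
    have h0 := h 0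
    have h1 := h 1
    have h2 := h 2
    have h3 := h 3
    have h4 := h 4
    clear h
    revert h0 h1 h2 h3 h4
    fin_cases i <;> fin_cases j <;> simp [threeSun]
  refine ⟨⟨⟨![c₀, c₁, c₂, u₃, u₄, u₅], fun i j hij => hsep i j fun k => ?_⟩, fun {i j} => hadj i j⟩⟩
  rw [← hadj, ← hadj, hij]

/-! ### The triangle of branches at a junction -/

/-- The paths through a junction use exactly the three pairs of some three neighbours `a, b, c` of
`x`, and each pair is realised. -/
theorem exists_triangle {V β : Type*} {T : SimpleGraph β} (hT : T.IsTree)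
    {C : β → Set V} (hCx : ∀ y z, C y ⊆ C z → y = z)
    {P : V → Set β} (hP : ∀ (v : V) (x : β), x ∈ P v ↔ v ∈ C x)
    (hpath : ∀ v : V, InducesPath T (P v))
    (hnc : ∀ u v : V, u ≠ v → NonCrossing T (P u) (P v))
    {x : β} (hx : IsJunction T P x) (hne : (C x).Nonempty) :
    ∃ (a b c : β) (u v w : V), a ≠ b ∧ b ≠ c ∧ a ≠ c ∧ T.Adj x a ∧ T.Adj x b ∧ T.Adj x c ∧
      u ∈ C x ∧ v ∈ C x ∧ w ∈ C x ∧
      (∀ y, T.Adj x y → (y ∈ P u ↔ y = a ∨ y = b)) ∧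
      (∀ y, T.Adj x y → (y ∈ P v ↔ y = b ∨ y = c)) ∧
      (∀ y, T.Adj x y → (y ∈ P w ↔ y = a ∨ y = c)) ∧
      ∀ t ∈ C x, (∀ y, T.Adj x y → (y ∈ P t ↔ y = a ∨ y = b)) ∨
        (∀ y, T.Adj x y → (y ∈ P t ↔ y = b ∨ y = c)) ∨
        (∀ y, T.Adj x y → (y ∈ P t ↔ y = a ∨ y = c)) := by
  have pair : ∀ v ∈ C x, ∃ a b, a ≠ b ∧ T.Adj x a ∧ T.Adj x b ∧
      ∀ y, T.Adj x y → (y ∈ P v ↔ y = a ∨ y = b) := fun v hv =>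
    exists_nbr_pair (hpath v) ((hP v x).2 hv) (hx v ((hP v x).2 hv))
  -- Paths through `x` with disjoint neighbour pairs would cross.
  have meet : ∀ s ∈ C x, ∀ t ∈ C x, ∃ y, T.Adj x y ∧ y ∈ P s ∧ y ∈ P t := by
    intro s hs t ht
    obtain ⟨a, b, hab, ha, hb, h⟩ := pair s hs
    by_contra! hcon
    have has : a ∈ P s := (h a ha).2 (.inl rfl)
    have hbs : b ∈ P s := (h b hb).2 (.inr rfl)
    have hst : s ≠ t := by rintro rfl; exact hcon a ha has has
    exact not_two_branches hT (hnc s t hst).1 ((hP t x).2 ht) ha hb hab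
      ⟨has, hcon a ha has⟩ ⟨hbs, hcon b hb hbs⟩ (Avoids.refl ha.ne') (Avoids.refl hb.ne')
  have miss : ∀ a, T.Adj x a → ∃ v ∈ C x, a ∉ P v := by
    intro a ha
    by_contra! hcon
    exact ha.ne (hCx x a fun v hv => (hP v a).1 (hcon v hv))
  obtain ⟨u, hu⟩ := hne
  obtain ⟨a, b, hab, ha, hb, hPu⟩ := pair u hu
  obtain ⟨v, hv, hav⟩ := miss a ha
  obtain ⟨w, hw, hbw⟩ := miss b hb
  have hbv : b ∈ P v := by
    obtain ⟨y, hy, h1, h2⟩ := meet u hu v hv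
    rcases (hPu y hy).1 h1 with rfl | rfl
    · exact absurd h2 hav
    · exact h2
  have haw : a ∈ P w := by
    obtain ⟨y, hy, h1, h2⟩ := meet u hu w hw
    rcases (hPu y hy).1 h1 with rfl | rfl
    · exact h2
    · exact absurd h2 hbw
  obtain ⟨c, hbc, hc, hPv⟩ : ∃ c, b ≠ c ∧ T.Adj x c ∧
      ∀ y, T.Adj x y → (y ∈ P v ↔ y = b ∨ y = c) := by
    obtain ⟨d, e, hde, hd, he, h⟩ := pair v hv
    rcases (h b hb).1 hbv with rfl | rfl
    · exact ⟨e, hde, he, h⟩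
    · exact ⟨d, hde.symm, hd, fun y hy => (h y hy).trans or_comm⟩
  have hac : a ≠ c := by rintro rfl; exact hav ((hPv a ha).2 (.inr rfl))
  have hcw : c ∈ P w := by
    obtain ⟨y, hy, h1, h2⟩ := meet v hv w hw
    rcases (hPv y hy).1 h1 with rfl | rfl
    · exact absurd h2 hbw
    · exact h2
  -- A pair containing two given distinct neighbours consists of exactly these two.
  have two : ∀ t ∈ C x, ∀ p q, p ≠ q → T.Adj x p → T.Adj x q → p ∈ P t → q ∈ P t →
      ∀ y, T.Adj x y → (y ∈ P t ↔ y = p ∨ y = q) := by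
    intro t ht p q hpq hp hq hpt hqt y hy
    obtain ⟨d, e, hde, hd, he, h⟩ := pair t ht
    have h1 := (h p hp).1 hpt
    have h2 := (h q hq).1 hqt
    rw [h y hy]
    grind
  have hPw := two w hw a c hac ha hc haw hcw
  refine ⟨a, b, c, u, v, w, hab, hbc, hac, ha, hb, hc, hu, hv, hw, hPu, hPv, hPw, fun t ht => ?_⟩
  -- Meeting all three sides of the triangle forces two of its corners.
  have m1 : a ∈ P t ∨ b ∈ P t := by
    obtain ⟨y, hy, h1, h2⟩ := meet u hu t ht
    rcases (hPu y hy).1 h1 with rfl | rfl <;> simp [h2]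
  have m2 : b ∈ P t ∨ c ∈ P t := by
    obtain ⟨y, hy, h1, h2⟩ := meet v hv t ht
    rcases (hPv y hy).1 h1 with rfl | rfl <;> simp [h2]
  have m3 : a ∈ P t ∨ c ∈ P t := by
    obtain ⟨y, hy, h1, h2⟩ := meet w hw t ht
    rcases (hPw y hy).1 h1 with rfl | rfl <;> simp [h2]
  by_cases hat : a ∈ P t
  · by_cases hbt : b ∈ P t
    · exact .inl (two t ht a b hab ha hb hat hbt)
    · exact .inr (.inr (two t ht a c hac ha hc hat (m2.resolve_left hbt)))
  · exact .inr (.inl (two t ht b c hbc hb hc (m1.resolve_left hat) (m3.resolve_left hat)))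

/-- Members of `C x` with the same neighbour pair `{a, b}` have the same path, provided the pairs
`{b, c}` and `{a, c}` are realised: on the branch of `b` both agree with the path of pair `{b, c}`,
and on the branch of `a` with that of pair `{a, c}`. Only one inclusion is stated. -/
theorem path_subset_of_same_pair {V β : Type*} {T : SimpleGraph β} (hT : T.IsTree)
    {P : V → Set β} (hpath : ∀ v : V, InducesPath T (P v))
    (hnc : ∀ u v : V, u ≠ v → NonCrossing T (P u) (P v))
    {x a b c : β} (hab : a ≠ b) (hbc : b ≠ c) (hac : a ≠ c)
    (ha : T.Adj x a) (hb : T.Adj x b) (hc : T.Adj x c) {u u' v w : V}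
    (hu : x ∈ P u) (hu' : x ∈ P u') (hv : x ∈ P v) (hw : x ∈ P w)
    (hPu : ∀ y, T.Adj x y → (y ∈ P u ↔ y = a ∨ y = b))
    (hPu' : ∀ y, T.Adj x y → (y ∈ P u' ↔ y = a ∨ y = b))
    (hPv : ∀ y, T.Adj x y → (y ∈ P v ↔ y = b ∨ y = c))
    (hPw : ∀ y, T.Adj x y → (y ∈ P w ↔ y = a ∨ y = c)) : P u ⊆ P u' := by
  intro z hz
  have au : a ∈ P u := by simp [hPu a ha]
  have bu : b ∈ P u := by simp [hPu b hb]
  have cu' : c ∉ P u' := by simp [hPu' c hc, hbc.symm, hac.symm]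
  have av : a ∉ P v := by simp [hPv a ha, hab, hac]
  have cv : c ∈ P v := by simp [hPv c hc]
  have bw : b ∉ P w := by simp [hPw b hb, hab.symm, hbc]
  have cw : c ∈ P w := by simp [hPw c hc]
  have huv : u ≠ v := by rintro rfl; exact av au
  have huw : u ≠ w := by rintro rfl; exact bw bu
  have hvu' : v ≠ u' := by rintro rfl; exact cu' cv
  have hwu' : w ≠ u' := by rintro rfl; exact cu' cw
  by_cases hzx : z = x
  · exact hzx ▸ hu'
  obtain ⟨d, hd, hxd, hzd⟩ := exists_adj_avoids (hpath u).preconnected hu hz hzx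
  rcases (hPu d hxd).1 hd with rfl | rfl
  · have := branch_subset hT (hnc u w huw).1 hw hb ha hab.symm bu bw hz hzd
    exact branch_subset hT (hnc w u' hwu').1 hu' hc ha hac.symm cw cu' this hzd
  · have := branch_subset hT (hnc u v huv).1 hv ha hb hab au av hz hzd
    exact branch_subset hT (hnc v u' hvu').1 hu' hc hb hbc.symm cv cu' this hzd

/-! ### The 3-sun at a junction and the size of its clique -/

/-- if the model has a junction `x`, then `G` contains an induced 3-sun;
moreover, if `G` is twin-free then the maximal clique at `x` has exactly three vertices. -/
theorem stmt_7
    {V β : Type*} [Fintype V] (G : SimpleGraph V) (hconn : G.Connected)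
    (T : SimpleGraph β) (hT : T.IsTree)
    (C : β → Set V) (hCinj : Function.Injective C)
    (hCmax : ∀ x : β, IsMaxClique G (C x))
    (hCsurj : ∀ s : Set V, IsMaxClique G s → ∃ x : β, C x = s)
    (P : V → Set β) (hP : ∀ (v : V) (x : β), x ∈ P v ↔ v ∈ C x)
    (hpath : ∀ v : V, InducesPath T (P v))
    (hnc : ∀ u v : V, u ≠ v → NonCrossing T (P u) (P v))
    (x : β) (hx : IsJunction T P x) :
    Nonempty (threeSun ↪g G) ∧
      ((∀ u v : V, Twins G u v → u = v) → (C x).ncard = 3) := by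
  have hCx : ∀ y z, C y ⊆ C z → y = z := fun y z h =>
    hCinj ((hCmax y).2 (C z) (hCmax z).1 h)
  have hne : (C x).Nonempty := by
    rw [Set.nonempty_iff_ne_empty]
    intro h0
    obtain ⟨v⟩ := hconn.nonempty
    have := (hCmax x).2 {v} (by simp) (by simp [h0])
    rw [h0] at this
    exact Set.singleton_ne_empty v this.symm
  have hadj : ∀ {u v : V}, G.Adj u v ↔ u ≠ v ∧ ∃ z, u ∈ C z ∧ v ∈ C z :=
    adj_iff_common_clique hCmax hCsurj
  obtain ⟨a, b, c, u, v, w, hab, hbc, hac, ha, hb, hc, hu, hv, hw, hPu, hPv, hPw, hall⟩ :=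
    exists_triangle hT hCx hP hpath hnc hx hne
  have au : a ∈ P u := by simp [hPu a ha]
  have bu : b ∈ P u := by simp [hPu b hb]
  have cu : c ∉ P u := by simp [hPu c hc, hbc.symm, hac.symm]
  have av : a ∉ P v := by simp [hPv a ha, hab, hac]
  have bv : b ∈ P v := by simp [hPv b hb]
  have cv : c ∈ P v := by simp [hPv c hc]
  have aw : a ∈ P w := by simp [hPw a ha]
  have bw : b ∉ P w := by simp [hPw b hb, hab.symm, hbc]
  have cw : c ∈ P w := by simp [hPw c hc]
  have huv : u ≠ v := by rintro rfl; exact av au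
  have huw : u ≠ w := by rintro rfl; exact bw bu
  have hvw : v ≠ w := by rintro rfl; exact bw bv
  constructor
  -- Over each neighbour `d` of `x` there is a vertex whose path stays inside the branch of `d`.
  · have tip : ∀ d, T.Adj x d → ∃ t, d ∈ P t ∧ x ∉ P t ∧ ∀ z ∈ P t, Avoids T x z d := by
      intro d hd
      have : ¬ C d ⊆ C x := fun h => hd.ne' (hCx d x h)
      obtain ⟨t, htd, htx⟩ := Set.not_subset.1 this
      have h1 : d ∈ P t := (hP t d).2 htd
      have h2 : x ∉ P t := fun h => htx ((hP t x).1 h)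
      exact ⟨t, h1, h2, fun z hz => avoids_of_preconnected (hpath t).preconnected h2 hz h1⟩
    have yes : ∀ {d t s}, d ∈ P t → x ∉ P t → d ∈ P s → s ∈ C x → G.Adj t s := by
      intro d t s hdt hxt hds hs
      refine hadj.2 ⟨?_, d, (hP t d).1 hdt, (hP s d).1 hds⟩
      rintro rfl
      exact hxt ((hP t x).2 hs)
    have no : ∀ {d t s}, T.Adj x d → x ∉ P t → (∀ z ∈ P t, Avoids T x z d) → d ∉ P s →
        s ∈ C x → ¬ G.Adj t s := by
      intro d t s hd hxt ht hds hs hts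
      obtain ⟨-, z, hzt, hzs⟩ := hadj.1 hts
      have hzt := (hP t z).2 hzt
      have hzx : z ≠ x := by rintro rfl; exact hxt hzt
      obtain ⟨e, he, hxe, hze⟩ := exists_adj_avoids (hpath s).preconnected ((hP s x).2 hs)
        ((hP s z).2 hzs) hzx
      have : d = e := Avoids.eq_of_adj hT hd hxe ((ht z hzt).symm.trans hze)
      exact hds (this ▸ he)
    have no' : ∀ {d e t s}, T.Adj x d → T.Adj x e → d ≠ e → (∀ z ∈ P t, Avoids T x z d) →
        (∀ z ∈ P s, Avoids T x z e) → ¬ G.Adj t s := by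
      intro d e t s hd he hde ht hs hts
      obtain ⟨-, z, hzt, hzs⟩ := hadj.1 hts
      exact hde (Avoids.eq_of_adj hT hd he
        ((ht z ((hP t z).2 hzt)).symm.trans (hs z ((hP s z).2 hzs))))
    obtain ⟨ta, a1, a2, a3⟩ := tip a ha
    obtain ⟨tb, b1, b2, b3⟩ := tip b hb
    obtain ⟨tc, c1, c2, c3⟩ := tip c hc
    exact exists_threeSun u v w tb tc ta
      ((hCmax x).1 hu hv huv) ((hCmax x).1 hu hw huw) ((hCmax x).1 hv hw hvw)
      (yes b1 b2 bu hu) (yes b1 b2 bv hv) (yes c1 c2 cv hv) (yes c1 c2 cw hw)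
      (yes a1 a2 aw hw) (yes a1 a2 au hu)
      (no hb b2 b3 bw hw) (no hc c2 c3 cu hu) (no ha a2 a3 av hv)
      (no' hb hc hbc b3 c3) (no' hc ha hac.symm c3 a3) (no' hb ha hab.symm b3 a3)
  · intro htw
    -- The closed neighbourhood of a vertex is the union of the cliques along its path.
    have same : ∀ s t, P s ⊆ P t → P t ⊆ P s → s = t := by
      intro s t h1 h2
      have hN : ∀ r y, y ∈ insert r (G.neighborSet r) ↔ ∃ z ∈ P r, y ∈ C z := by
        intro r y
        rw [Set.mem_insert_iff, SimpleGraph.mem_neighborSet, hadj]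
        constructor
        · rintro (rfl | ⟨-, z, hz, hz'⟩)
          · obtain ⟨n, f, -, hf, -⟩ := hpath y
            have : f 0 ∈ P y := hf ▸ Set.mem_range_self 0
            exact ⟨f 0, this, (hP y _).1 this⟩
          · exact ⟨z, (hP r z).2 hz, hz'⟩
        · rintro ⟨z, hz, hz'⟩
          by_cases hyr : y = r
          · exact .inl hyr
          · exact .inr ⟨Ne.symm hyr, z, (hP r z).1 hz, hz'⟩
      apply htw
      ext y
      rw [hN, hN, h1.antisymm h2]
    have hxP : ∀ {t}, t ∈ C x → x ∈ P t := fun {t} h => (hP t x).2 h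
    have hswap : ∀ {t p q}, (∀ y, T.Adj x y → (y ∈ P t ↔ y = p ∨ y = q)) →
        ∀ y, T.Adj x y → (y ∈ P t ↔ y = q ∨ y = p) := fun h y hy => (h y hy).trans or_comm
    have hC : C x = {u, v, w} := by
      ext t
      simp only [Set.mem_insert_iff, Set.mem_singleton_iff]
      refine ⟨fun ht => ?_, by rintro (rfl | rfl | rfl) <;> assumption⟩
      rcases hall t ht with h | h | h
      · left
        exact same t u
          (path_subset_of_same_pair hT hpath hnc hab hbc hac ha hb hc
            (hxP ht) (hxP hu) (hxP hv) (hxP hw) h hPu hPv hPw)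
          (path_subset_of_same_pair hT hpath hnc hab hbc hac ha hb hc
            (hxP hu) (hxP ht) (hxP hv) (hxP hw) hPu h hPv hPw)
      · right; left
        exact same t v
          (path_subset_of_same_pair hT hpath hnc hbc hac.symm hab.symm hb hc ha
            (hxP ht) (hxP hv) (hxP hw) (hxP hu) h hPv (hswap hPw) (hswap hPu))
          (path_subset_of_same_pair hT hpath hnc hbc hac.symm hab.symm hb hc ha
            (hxP hv) (hxP ht) (hxP hw) (hxP hu) hPv h (hswap hPw) (hswap hPu))
      · right; right
        exact same t w
          (path_subset_of_same_pair hT hpath hnc hac hbc.symm hab ha hc hb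
            (hxP ht) (hxP hw) (hxP hv) (hxP hu) h hPw (hswap hPv) hPu)
          (path_subset_of_same_pair hT hpath hnc hac hbc.symm hab ha hc hb
            (hxP hw) (hxP ht) (hxP hv) (hxP hu) hPw h (hswap hPv) hPu)
    rw [hC]
    exact Set.ncard_eq_three.2 ⟨u, v, w, huv, huw, hvw, rfl⟩
end

section
/- Let G be a finite connected graph with a clique NC-path-tree model ({P_v}, T), and suppose T has a terminal node x of degree at least three in T. Then G contains an induced subgraph isomorphic to the net. -/
/-!
Let `y₀, y₁, y₂` be three neighbours of the terminal `x`. Deleting the edge `x yᵢ` separates the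
tree `T` into the side of `x` and the side of `yᵢ`, and a path `P v` that does not use this edge
lies on one side (`reachable_of_not_mem`).

* Since `G` is connected and adjacent vertices share a maximal clique, some path `P cᵢ` does use
  the edge `x yᵢ`, that is, `cᵢ ∈ C x ∩ C yᵢ` (`exists_mem_inter`). As `x` is a terminal, `P cᵢ`
  contains no other neighbour of `x`.
* Since `C yᵢ` is a maximal clique different from `C x`, there is `uᵢ ∈ C yᵢ \ C x`
  (`exists_mem_diff`). The path `P uᵢ` stays on the side of `yᵢ`, while `P uⱼ` and `P cⱼ`, for
  `j ≠ i`, stay on the side of `x`, so `uᵢ` is adjacent neither to `uⱼ` nor to `cⱼ`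
  (`not_mem_of_sep`).

The `cᵢ` are pairwise adjacent because they all lie in `C x`, and `uᵢ` is adjacent to `cᵢ` because
both lie in `C yᵢ`; so the six vertices induce a net.
-/

open SimpleGraph

/-- A set inducing a path that does not use the edge `x y` stays connected when that edge is
deleted. -/
lemma reachable_of_not_mem {β : Type*} {T : SimpleGraph β} {S : Set β} (hS : InducesPath T S)
    {x y : β} (hxy : ¬ (x ∈ S ∧ y ∈ S)) {a b : β} (ha : a ∈ S) (hb : b ∈ S) :
    (T.deleteEdges {s(x, y)}).Reachable a b := by
  obtain ⟨n, f, -, rfl, hadj⟩ := hS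
  have key : ∀ (k : ℕ) (hk : k < n + 1),
      (T.deleteEdges {s(x, y)}).Reachable (f 0) (f ⟨k, hk⟩) := by
    intro k
    induction k with
    | zero => intro hk; exact Reachable.refl _
    | succ k ih =>
      intro hk
      refine (ih (by omega)).trans (Adj.reachable ?_)
      rw [deleteEdges_adj]
      refine ⟨(hadj _ _).2 (Or.inl rfl), fun h => hxy ?_⟩
      rw [Set.mem_singleton_iff, Sym2.eq_iff] at h
      rcases h with ⟨h1, h2⟩ | ⟨h1, h2⟩
      · exact ⟨⟨_, h1⟩, ⟨_, h2⟩⟩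
      · exact ⟨⟨_, h2⟩, ⟨_, h1⟩⟩
  obtain ⟨i, rfl⟩ := ha
  obtain ⟨j, rfl⟩ := hb
  exact (key i.1 i.2).symm.trans (key j.1 j.2)

lemma not_reachable_of_tree {β : Type*} {T : SimpleGraph β} (hT : T.IsTree) {x y : β}
    (h : T.Adj x y) : ¬ (T.deleteEdges {s(x, y)}).Reachable x y :=
  isBridge_iff.1 (isAcyclic_iff_forall_adj_isBridge.1 hT.isAcyclic h)

lemma exists_common_of_adj {V β : Type*} [Fintype V] {G : SimpleGraph V} {C : β → Set V}
    (hCsurj : ∀ s : Set V, IsMaxClique G s → ∃ x : β, C x = s) {u v : V} (h : G.Adj u v) :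
    ∃ z, u ∈ C z ∧ v ∈ C z := by
  have hc : G.IsClique ({u, v} : Set V) := isClique_pair.2 fun _ => h
  obtain ⟨s, hs, hmax⟩ := Finite.exists_le_maximal (p := fun s : Set V => G.IsClique s) hc
  obtain ⟨z, rfl⟩ := hCsurj s ⟨hmax.1, fun t ht hst => hst.antisymm (hmax.2 ht hst)⟩
  exact ⟨z, hs (by simp), hs (by simp)⟩

lemma exists_mem_diff {V β : Type*} {G : SimpleGraph V} {C : β → Set V}
    (hCinj : Function.Injective C) (hCmax : ∀ x : β, IsMaxClique G (C x)) {x y : β}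
    (h : x ≠ y) : ∃ u, u ∈ C y ∧ u ∉ C x := by
  by_contra! hcon
  exact h (hCinj ((hCmax y).2 _ (hCmax x).1 hcon).symm)

/-- Every edge `x y` of the tree is used by some path of the model: otherwise all cliques
reachable in `G` from a vertex of `C x` would lie on the side of `x`. -/
lemma exists_mem_inter {V β : Type*} [Fintype V] {G : SimpleGraph V} (hconn : G.Connected)
    {T : SimpleGraph β} (hT : T.IsTree) {C : β → Set V}
    (hCmax : ∀ x : β, IsMaxClique G (C x))
    (hCsurj : ∀ s : Set V, IsMaxClique G s → ∃ x : β, C x = s)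
    {P : V → Set β} (hP : ∀ (v : V) (x : β), x ∈ P v ↔ v ∈ C x)
    (hpath : ∀ v : V, InducesPath T (P v)) {x y : β} (hxy : T.Adj x y) :
    ∃ c, c ∈ C x ∧ c ∈ C y := by
  by_contra! hcon
  have hne : ∀ z, (C z).Nonempty := by
    intro z
    obtain ⟨v⟩ := hconn.nonempty
    by_contra he
    rw [Set.not_nonempty_iff_eq_empty] at he
    have := (hCmax z).2 {v} (isClique_singleton v) (by simp [he])
    rw [he] at this
    exact Set.singleton_ne_empty v this.symm
  have hn : ∀ v, ¬ (x ∈ P v ∧ y ∈ P v) := fun v h => hcon v ((hP _ _).1 h.1) ((hP _ _).1 h.2)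
  obtain ⟨v₀, h₀⟩ := hne x
  obtain ⟨v₁, h₁⟩ := hne y
  have key : ∀ {a b : V}, G.Walk a b →
      (∀ z ∈ P a, (T.deleteEdges {s(x, y)}).Reachable x z) →
      ∀ z ∈ P b, (T.deleteEdges {s(x, y)}).Reachable x z := by
    intro a b w
    induction w with
    | nil => exact id
    | cons h w ih =>
      intro ha
      refine ih fun z hz => ?_
      obtain ⟨t, ht, ht'⟩ := exists_common_of_adj hCsurj h
      exact (ha t ((hP _ _).2 ht)).trans
        (reachable_of_not_mem (hpath _) (hn _) ((hP _ _).2 ht') hz)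
  obtain ⟨w⟩ := hconn.preconnected v₀ v₁
  exact not_reachable_of_tree hT hxy (key w
    (fun z hz => reachable_of_not_mem (hpath v₀) (hn v₀) ((hP _ _).2 h₀) hz) y ((hP _ _).2 h₁))

/-- If `P u` lies on the side of `y` and `P w` on the side of `x` of the edge `x y`, then `u` and
`w` are in no common clique of the model. -/
lemma not_mem_of_sep {V β : Type*} {T : SimpleGraph β} (hT : T.IsTree) {P : V → Set β}
    (hpath : ∀ v : V, InducesPath T (P v)) {x y : β} (hxy : T.Adj x y)
    {u w : V} (hyu : y ∈ P u) (hxu : x ∉ P u) {b : β} (hb : b ∈ P w) (hw : ¬ (x ∈ P w ∧ y ∈ P w))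
    (hxb : (T.deleteEdges {s(x, y)}).Reachable x b) {z : β} (hzu : z ∈ P u) : z ∉ P w := fun hzw =>
  not_reachable_of_tree hT hxy <| (hxb.trans (reachable_of_not_mem (hpath w) hw hb hzw)).trans
    (reachable_of_not_mem (hpath u) (fun h => hxu h.1) hzu hyu)

/-- Recognition of an induced net with triangle `c 0, c 1, c 2` and pendant vertices `u i ~ c i`. -/
lemma net_embedding_of {V : Type*} {G : SimpleGraph V} {c u : Fin 3 → V}
    (hc : G.IsClique (Set.range c)) (hc_ne : ∀ i j, i ≠ j → c i ≠ c j)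
    (hu_ne : ∀ i j, i ≠ j → u i ≠ u j) (huc_ne : ∀ i j, u i ≠ c j)
    (hadj : ∀ i, G.Adj (u i) (c i)) (huc : ∀ i j, i ≠ j → ¬ G.Adj (u i) (c j))
    (huu : ∀ i j, ¬ G.Adj (u i) (u j)) : Nonempty (net ↪g G) := by
  have hcc : ∀ i j, i ≠ j → G.Adj (c i) (c j) := fun i j hij =>
    hc ⟨i, rfl⟩ ⟨j, rfl⟩ (hc_ne i j hij)
  have hcu_ne : ∀ i j, c j ≠ u i := fun i j => (huc_ne i j).symm
  have hadj' : ∀ i, G.Adj (c i) (u i) := fun i => (hadj i).symm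
  have hcu : ∀ i j, i ≠ j → ¬ G.Adj (c j) (u i) := fun i j hij h => huc i j hij h.symm
  set f : Fin 6 → V := ![c 0, c 1, c 2, u 0, u 1, u 2] with hf
  have hinj : ∀ i j, f i = f j → i = j := by
    simp [hf, Fin.forall_fin_succ, hc_ne, hu_ne, huc_ne, hcu_ne]
  have hmap : ∀ i j, G.Adj (f i) (f j) ↔ net.Adj i j := by
    simp [hf, Fin.forall_fin_succ, net, hcc, hadj, hadj', huc, hcu, huu]
  exact ⟨⟨⟨f, fun i j => hinj i j⟩, fun {i j} => hmap i j⟩⟩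

/-- if the model has a terminal of degree at least three,
then `G` contains an induced net. -/
theorem stmt_8
    {V β : Type*} [Fintype V] (G : SimpleGraph V) (hconn : G.Connected)
    (T : SimpleGraph β) (hT : T.IsTree)
    (C : β → Set V) (hCinj : Function.Injective C)
    (hCmax : ∀ x : β, IsMaxClique G (C x))
    (hCsurj : ∀ s : Set V, IsMaxClique G s → ∃ x : β, C x = s)
    (P : V → Set β) (hP : ∀ (v : V) (x : β), x ∈ P v ↔ v ∈ C x)
    (hpath : ∀ v : V, InducesPath T (P v))
    (hnc : ∀ u v : V, u ≠ v → NonCrossing T (P u) (P v))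
    (x : β) (hx : IsTerminal T P x) (hdeg : 3 ≤ (T.neighborSet x).ncard) :
    Nonempty (net ↪g G) := by
  obtain ⟨y₀, y₁, y₂, h₀, h₁, h₂, h01, h02, h12⟩ :=
    (Set.two_lt_ncard_iff (Set.finite_of_ncard_pos (by omega))).1 hdeg
  obtain ⟨y, hy, hyinj⟩ : ∃ y : Fin 3 → β, (∀ i, T.Adj x (y i)) ∧ ∀ i j, i ≠ j → y i ≠ y j := by
    refine ⟨![y₀, y₁, y₂], fun i => ?_, fun i j hij => ?_⟩
    · fin_cases i <;> assumption
    · fin_cases i <;> fin_cases j <;> simp_all [eq_comm]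
  choose c hcx hcy using fun i =>
    exists_mem_inter hconn hT hCmax hCsurj hP hpath (hy i)
  choose u huy hux using fun i => exists_mem_diff hCinj hCmax (hy i).ne
  have hcy' : ∀ i j, i ≠ j → y i ∉ P (c j) := fun i j hij hmem =>
    hyinj i j hij ((hx (c j) ((hP _ _).2 (hcx j))).2 ⟨hmem, hy i⟩ ⟨(hP _ _).2 (hcy j), hy j⟩)
  have hxu : ∀ i, x ∉ P (u i) := fun i h => hux i ((hP _ _).1 h)
  have hyu : ∀ i, y i ∈ P (u i) := fun i => (hP _ _).2 (huy i)
  have huc : ∀ i j, i ≠ j → ¬ G.Adj (u i) (c j) := by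
    intro i j hij hadj
    obtain ⟨z, hzu, hzc⟩ := exists_common_of_adj hCsurj hadj
    exact not_mem_of_sep hT hpath (hy i) (hyu i) (hxu i) ((hP _ _).2 (hcx j))
      (fun h => hcy' i j hij h.2) (Reachable.refl _) ((hP _ _).2 hzu) ((hP _ _).2 hzc)
  have huu' : ∀ i j, i ≠ j → ∀ z ∈ P (u i), z ∉ P (u j) := by
    intro i j hij z hz
    refine not_mem_of_sep hT hpath (hy i) (hyu i) (hxu i) (hyu j) (fun h => hxu j h.1)
      (Adj.reachable ?_) hz
    rw [deleteEdges_adj]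
    refine ⟨hy j, fun h => hyinj i j hij ?_⟩
    exact (Sym2.congr_right.1 (Set.mem_singleton_iff.1 h)).symm
  have huu : ∀ i j, ¬ G.Adj (u i) (u j) := by
    intro i j hadj
    obtain ⟨z, hzi, hzj⟩ := exists_common_of_adj hCsurj hadj
    exact huu' i j (fun h => hadj.ne (congrArg u h)) z ((hP _ _).2 hzi) ((hP _ _).2 hzj)
  have hu_ne : ∀ i j, i ≠ j → u i ≠ u j := fun i j hij h =>
    huu' i j hij (y i) (hyu i) (h ▸ hyu i)
  have hc_ne : ∀ i j, i ≠ j → c i ≠ c j := fun i j hij h =>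
    hcy' i j hij (h ▸ (hP _ _).2 (hcy i))
  have huc_ne : ∀ i j, u i ≠ c j := fun i j h => hux i (h ▸ hcx j)
  exact net_embedding_of (hCmax x |>.1.subset (Set.range_subset_iff.2 hcx)) hc_ne hu_ne huc_ne
    (fun i => (hCmax (y i)).1 (huy i) (hcy i) (huc_ne i i)) huc huu
end
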